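/- arXiv:2201.02717 — 2 statements merged into one kernel-verified Lean document; each statement's English description precedes it below -/
import Mathlib

section
/- Let R be a finitely generated ℕ-graded k-algebra of Krull dimension d and let I be the ideal generated by a homogeneous system of parameters of R of degrees δ_1, …, δ_d. Then for every nonzero complex number y, F(R,R,I)(y) = e_R · Π_{j=1}^{d} (1 − e^{−iδ_j y})/(iy), where e_R is the Hilbert–Samuel multiplicity of R. -/
open Filter Complex

noncomputable section

/-- The Frobenius bracket power `I^{[q]}` of an ideal. -/
def bracketPow {R : Type*} [CommSemiring R] (I : Ideal R) (q : ℕ) : Ideal R :=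
  Ideal.span ((fun x : R => x ^ q) '' (I : Set R))

/-- `λ_k((M/N)_j)`. -/
def quotPieceDim (k : Type*) {R M : Type*} [Field k] [CommRing R] [Algebra k R]
    [AddCommGroup M] [Module R M] [Module k M] [IsScalarTower k R M]
    (ℳ : ℤ → Submodule k M) (N : Submodule R M) (j : ℤ) : ℕ :=
  Module.finrank k ((ℳ j).map (N.mkQ.restrictScalars k))

/-- `F_n(M,R,I,d)(y)`. -/
def FnGen (k : Type*) {R M : Type*} [Field k] [CommRing R] [Algebra k R]
    [AddCommGroup M] [Module R M] [Module k M] [IsScalarTower k R M]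
    (ℳ : ℤ → Submodule k M) (I : Ideal R) (p d n : ℕ) (y : ℂ) : ℂ :=
  (1 / (p : ℂ) ^ n) ^ d *
    ∑' j : ℤ, (quotPieceDim k (R := R) ℳ (bracketPow I (p ^ n) • ⊤) j : ℂ) *
      Complex.exp (-Complex.I * y * (j : ℂ) / (p : ℂ) ^ n)

/-- The `n`-th term of the sequence `d!·n^{-d}·Σ_{j ≤ n} λ_k(R_j)` computing the
Hilbert–Samuel multiplicity of a graded ring/module. -/
def hsSeq (k : Type*) {R : Type*} [Field k] [AddCommGroup R] [Module k R]
    (𝒜 : ℤ → Submodule k R) (d n : ℕ) : ℝ :=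
  (d.factorial : ℝ) / (n : ℝ) ^ d *
    ∑' j : ℤ, (if j ≤ (n : ℤ) then (Module.finrank k (𝒜 j) : ℝ) else 0)

/-!
Writing `f^α` for the monomials in the parameters, `R` has a `k`-basis of elements `f^α u_i` with
finitely many homogeneous `u_i`: by the graded Nakayama lemma the `u_i` may be lifted from a basis
of `R / (f)`, and a greedy choice, made in an order compatible with multiplication by monomials,
selects for every `i` a set of exponents `α` closed under passing to divisors. Such a set is either
all of `ℕ^d` or has only `O(q^(d-1))` points in the cube `[0, q)^d`. If `r` of these sets are all
of `ℕ^d`, counting lattice points in simplices gives `e_R = r / ∏ δ_l`.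

The elements `f^α u_i` with `α` in `[0, q)^d` span `R / (f^q)`, so up to `o(q^d)` its graded pieces
are no larger than those of the free module with basis the `u_i` of the full columns. In total they
are no smaller either: applying the multiplicity formula to `f^q` in place of `f` gives
`r * q^d ≤ λ(R / (f^q))`. Hence the Hilbert series of `R / (f^q)` may be replaced by that of the
free module, whose exponential sum factors into Riemann sums for `∫₀¹ e^(-i y δ_l t) dt`.
-/

open scoped Asymptotics

section LatticePoints

variable {d : ℕ}

/-- The lattice points `α` of the weighted simplex `∑ l, α l * δ l ≤ n`. The box only serves to make
this a `Finset`: it imposes nothing when all weights are positive. -/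
def weightedSimplex (δ : Fin d → ℕ) (n : ℕ) : Finset (Fin d → ℕ) :=
  (Fintype.piFinset fun _ => Finset.range (n + 1)).filter fun α => α ⬝ᵥ δ ≤ n

lemma le_dotProduct_of_pos {δ : Fin d → ℕ} (hδ : ∀ l, 0 < δ l) (α : Fin d → ℕ) (l : Fin d) :
    α l ≤ α ⬝ᵥ δ :=
  (Nat.le_mul_of_pos_right _ (hδ l)).trans
    (Finset.single_le_sum (f := fun l => α l * δ l) (fun _ _ => Nat.zero_le _) (Finset.mem_univ l))

lemma mem_weightedSimplex {δ : Fin d → ℕ} (hδ : ∀ l, 0 < δ l) {n : ℕ} {α : Fin d → ℕ} :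
    α ∈ weightedSimplex δ n ↔ α ⬝ᵥ δ ≤ n := by
  simp only [weightedSimplex, Finset.mem_filter, Fintype.mem_piFinset, Finset.mem_range,
    and_iff_right_iff_imp]
  exact fun h l => Nat.lt_succ_of_le ((le_dotProduct_of_pos hδ α l).trans h)

lemma mem_weightedSimplex_one {n : ℕ} {α : Fin d → ℕ} :
    α ∈ weightedSimplex 1 n ↔ ∑ l, α l ≤ n := by
  rw [mem_weightedSimplex (δ := 1) fun _ => Nat.one_pos, dotProduct_one]

lemma card_weightedSimplex_one (d n : ℕ) :
    (weightedSimplex (1 : Fin d → ℕ) n).card = (n + d).choose d := by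
  have slack : (weightedSimplex (1 : Fin d → ℕ) n).card =
      (Finset.univ.finsuppAntidiag n : Finset (Fin (d + 1) →₀ ℕ)).card := by
    refine Finset.card_nbij' (fun α => Finsupp.equivFunOnFinite.symm (Fin.cons (n - ∑ l, α l) α))
      (fun β l => β l.succ) ?_ ?_ ?_ ?_
    · intro α hα
      rw [Finset.mem_coe, mem_weightedSimplex_one] at hα
      simp [Fin.sum_univ_succ, hα]
    · intro β hβ
      simp only [Finset.mem_coe, Finset.mem_finsuppAntidiag, Fin.sum_univ_succ] at hβ
      rw [Finset.mem_coe, mem_weightedSimplex_one]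
      exact le_of_add_le_right hβ.1.le
    · exact fun α _ => funext fun l => by simp
    · intro β hβ
      simp only [Finset.mem_coe, Finset.mem_finsuppAntidiag, Fin.sum_univ_succ] at hβ
      ext l
      refine Fin.cases ?_ (fun l => ?_) l
      · simpa using Nat.sub_eq_of_eq_add hβ.1.symm
      · simp
  rw [slack, Finset.card_finsuppAntidiag_nat_eq_choose, Finset.card_univ, Fintype.card_fin,
    Nat.add_right_comm, Nat.add_sub_cancel, add_comm d n, Nat.choose_symm_add]

lemma card_piFinset_range (δ : Fin d → ℕ) :
    (Fintype.piFinset fun l => Finset.range (δ l)).card = ∏ l, δ l := by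
  simp

lemma choose_le_card_weightedSimplex_mul_prod {δ : Fin d → ℕ} (hδ : ∀ l, 0 < δ l) (n : ℕ) :
    (n + d).choose d ≤ (weightedSimplex δ n).card * ∏ l, δ l := by
  rw [← card_weightedSimplex_one, ← card_piFinset_range δ, ← Finset.card_product]
  refine Finset.card_le_card_of_injOn (fun β => (fun l => β l / δ l, fun l => β l % δ l)) ?_ ?_
  · intro β hβ
    rw [Finset.mem_coe, mem_weightedSimplex_one] at hβ
    rw [Finset.mem_coe, Finset.mem_product, mem_weightedSimplex hδ, Fintype.mem_piFinset]
    exact ⟨(Finset.sum_le_sum fun l _ => Nat.div_mul_le_self _ _).trans hβ,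
      fun l => Finset.mem_range.2 (Nat.mod_lt _ (hδ l))⟩
  · intro β _ β' _ h
    obtain ⟨hdiv, hmod⟩ := Prod.mk.inj h
    ext l
    rw [← Nat.div_add_mod (β l) (δ l), congrFun hdiv l, congrFun hmod l, Nat.div_add_mod]

lemma card_weightedSimplex_mul_prod_le_choose {δ : Fin d → ℕ} (hδ : ∀ l, 0 < δ l) (n : ℕ) :
    (weightedSimplex δ n).card * ∏ l, δ l ≤ (n + (∑ l, δ l + d)).choose d := by
  rw [← add_assoc, ← card_weightedSimplex_one, ← card_piFinset_range δ,
    ← Finset.card_product]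
  refine Finset.card_le_card_of_injOn (fun x l => x.1 l * δ l + x.2 l) ?_ ?_
  · rintro ⟨α, ρ⟩ hx
    simp only [Finset.mem_coe, Finset.mem_product, mem_weightedSimplex hδ, Fintype.mem_piFinset,
      Finset.mem_range] at hx
    rw [Finset.mem_coe, mem_weightedSimplex_one, Finset.sum_add_distrib]
    exact add_le_add hx.1 (Finset.sum_le_sum fun l _ => (hx.2 l).le)
  · have digits {r D : ℕ} (hr : r < D) (a : ℕ) : (a * D + r) / D = a ∧ (a * D + r) % D = r := by
      simp [mul_comm, Nat.mul_add_div (Nat.zero_lt_of_lt hr), Nat.div_eq_of_lt hr,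
        Nat.mod_eq_of_lt hr]
    rintro ⟨α, ρ⟩ hx ⟨α', ρ'⟩ hx' h
    simp only [Finset.mem_coe, Finset.mem_product, Fintype.mem_piFinset,
      Finset.mem_range] at hx hx'
    have h (l : Fin d) : α l * δ l + ρ l = α' l * δ l + ρ' l := congrFun h l
    refine Prod.ext (funext fun l => ?_) (funext fun l => ?_)
    · simpa only [h l, (digits (hx'.2 l) _).1] using (digits (hx.2 l) (α l)).1.symm
    · simpa only [h l, (digits (hx'.2 l) _).2] using (digits (hx.2 l) (α l)).2.symm

lemma tendsto_add_div_pow_iff (g : ℕ → ℝ) (c d : ℕ) (x : ℝ) :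
    Tendsto (fun n : ℕ => g (n + c) / (n : ℝ) ^ d) atTop (nhds x) ↔
      Tendsto (fun n : ℕ => g n / (n : ℝ) ^ d) atTop (nhds x) := by
  have shift : (fun n : ℕ => (n : ℝ) ^ d) ~[atTop] fun n : ℕ => ((n + c : ℕ) : ℝ) ^ d := by
    simpa only [Nat.cast_add, Pi.pow_def] using
      (Asymptotics.IsEquivalent.refl.add_const_of_norm_tendsto_atTop
        (c := (c : ℝ)) (tendsto_norm_atTop_atTop.comp tendsto_natCast_atTop_atTop)).symm.pow d
  rw [← tendsto_add_atTop_iff_nat (f := fun n : ℕ => g n / (n : ℝ) ^ d) c]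
  exact ((Asymptotics.IsEquivalent.refl (u := fun n => g (n + c))).div shift).tendsto_nhds_iff

lemma tendsto_choose_add_div_pow (c d : ℕ) :
    Tendsto (fun n : ℕ => ((n + c).choose d : ℝ) / (n : ℝ) ^ d) atTop
      (nhds (1 / d.factorial)) := by
  rw [tendsto_add_div_pow_iff fun n => (n.choose d : ℝ)]
  refine ((isEquivalent_choose d).div (v := fun n : ℕ => (n : ℝ) ^ d) .refl).symm.tendsto_nhds
    (tendsto_const_nhds.congr' ?_)
  filter_upwards [eventually_gt_atTop 0] with n hn
  have hn : (n : ℝ) ^ d ≠ 0 := by positivity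
  simp only [Pi.div_apply]
  field_simp

lemma tendsto_card_weightedSimplex_div_pow {δ : Fin d → ℕ} (hδ : ∀ l, 0 < δ l) :
    Tendsto (fun n : ℕ => ((weightedSimplex δ n).card : ℝ) / (n : ℝ) ^ d) atTop
      (nhds (1 / d.factorial / ∏ l, (δ l : ℝ))) := by
  have hprod : 0 < ∏ l, (δ l : ℝ) := Finset.prod_pos fun l _ => by exact_mod_cast hδ l
  refine tendsto_of_tendsto_of_tendsto_of_le_of_le
    ((tendsto_choose_add_div_pow d d).div_const _)
    ((tendsto_choose_add_div_pow (∑ l, δ l + d) d).div_const _) (fun n => ?_) (fun n => ?_)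
  · rw [div_right_comm]
    gcongr
    rw [div_le_iff₀ hprod]
    exact_mod_cast choose_le_card_weightedSimplex_mul_prod hδ n
  · rw [div_right_comm]
    gcongr
    rw [le_div_iff₀ hprod]
    exact_mod_cast card_weightedSimplex_mul_prod_le_choose hδ n

/-- The lattice points of the cube `[0, q)^d`. -/
def latticeBox (d q : ℕ) : Finset (Fin d → ℕ) := Fintype.piFinset fun _ => Finset.range q

lemma mem_latticeBox {q : ℕ} {α : Fin d → ℕ} : α ∈ latticeBox d q ↔ ∀ l, α l < q := by
  simp [latticeBox]

lemma card_latticeBox (d q : ℕ) : (latticeBox d q).card = q ^ d := by simp [latticeBox]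

lemma dotProduct_le_of_mem_latticeBox (δ : Fin d → ℕ) {q : ℕ} {α : Fin d → ℕ}
    (hα : α ∈ latticeBox d q) : α ⬝ᵥ δ ≤ q * ∑ l, δ l := by
  rw [dotProduct, Finset.mul_sum]
  exact Finset.sum_le_sum fun l _ => Nat.mul_le_mul_right _ (mem_latticeBox.1 hα l).le

lemma card_filter_latticeBox_lt_mul_le (q c : ℕ) (l : Fin d) :
    ((latticeBox d q).filter fun α => α l < c).card * q ≤ c * q ^ d := by
  have slab : (latticeBox d q).filter (fun α => α l < c) ⊆
      Fintype.piFinset (Function.update (fun _ => Finset.range q) l (Finset.range c)) := by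
    intro α hα
    rw [Finset.mem_filter, mem_latticeBox] at hα
    refine Fintype.mem_piFinset.2 fun l' => ?_
    obtain rfl | hne := eq_or_ne l' l
    · simpa using hα.2
    · simpa [hne] using hα.1 l'
  calc _ ≤ (c * ∏ _l' ∈ Finset.univ.erase l, q) * q := by
        refine Nat.mul_le_mul_right q ((Finset.card_le_card slab).trans_eq ?_)
        rw [Fintype.card_piFinset, ← Finset.mul_prod_erase _ _ (Finset.mem_univ l),
          Function.update_self, Finset.card_range]
        congr 1
        refine Finset.prod_congr rfl fun l' hl' => ?_
        rw [Function.update_of_ne (Finset.ne_of_mem_erase hl'), Finset.card_range]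
    _ = c * q ^ d := by
        rw [mul_assoc, Finset.prod_erase_mul _ _ (Finset.mem_univ l), Finset.prod_const,
          Finset.card_univ, Fintype.card_fin]

open Classical in
lemma card_filter_latticeBox_mem_mul_le {S : Set (Fin d → ℕ)} (hS : IsLowerSet S)
    {β : Fin d → ℕ} (hβ : β ∉ S) (q : ℕ) :
    ((latticeBox d q).filter (· ∈ S)).card * q ≤ (∑ l, β l) * q ^ d := by
  have cover : (latticeBox d q).filter (· ∈ S) ⊆
      Finset.univ.biUnion fun l => (latticeBox d q).filter fun α => α l < β l := by
    intro α hα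
    rw [Finset.mem_filter] at hα
    obtain ⟨l, hl⟩ : ∃ l, α l < β l := by
      by_contra! hle
      exact hβ (hS hle hα.2)
    simpa using ⟨hα.1, l, hl⟩
  calc _ ≤ (∑ l, ((latticeBox d q).filter fun α => α l < β l).card) * q :=
        Nat.mul_le_mul_right q ((Finset.card_le_card cover).trans Finset.card_biUnion_le)
    _ ≤ (∑ l, β l) * q ^ d := by
        rw [Finset.sum_mul, Finset.sum_mul]
        exact Finset.sum_le_sum fun l _ => card_filter_latticeBox_lt_mul_le q (β l) l

open Classical in
lemma tendsto_card_filter_latticeBox_mem_div_pow {S : Set (Fin d → ℕ)} (hS : IsLowerSet S)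
    (hne : S ≠ Set.univ) :
    Tendsto (fun q : ℕ => (((latticeBox d q).filter (· ∈ S)).card : ℝ) / (q : ℝ) ^ d) atTop
      (nhds 0) := by
  obtain ⟨β, hβ⟩ := (Set.ne_univ_iff_exists_notMem S).1 hne
  refine squeeze_zero' (.of_forall fun q => by positivity) ?_
    (tendsto_const_div_atTop_nhds_zero_nat ((∑ l, β l : ℕ) : ℝ))
  filter_upwards [eventually_gt_atTop 0] with q hq
  have hq : (0 : ℝ) < q := by exact_mod_cast hq
  rw [div_le_div_iff₀ (by positivity) hq]
  exact_mod_cast card_filter_latticeBox_mem_mul_le hS hβ q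

end LatticePoints

section Columns

variable {d : ℕ} {ι : Type*}

/-- The degree of the element `f^α u_i` indexed by `x = (α, i)`, where `f` has degrees `δ` and `u`
has degrees `a`. -/
def shiftedDegree (δ : Fin d → ℕ) (a : ι → ℤ) (x : (Fin d → ℕ) × ι) : ℤ :=
  (x.1 ⬝ᵥ δ : ℕ) + a x.2

open Classical in
/-- The indices `i` whose column `{α | (α, i) ∈ E}` is all of `ℕ^d`. -/
def fullColumns [Fintype ι] (E : Set ((Fin d → ℕ) × ι)) : Finset ι :=
  Finset.univ.filter fun i => ∀ α, (α, i) ∈ E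

open Classical in
/-- The points of `E` over the cube `[0, q)^d` in columns that are not full. They are negligible
next to `q ^ d` when the columns of `E` are lower sets. -/
def partialColumns [Fintype ι] (E : Set ((Fin d → ℕ) × ι)) (q : ℕ) :
    Finset ((Fin d → ℕ) × ι) :=
  (latticeBox d q ×ˢ (fullColumns E)ᶜ).filter (· ∈ E)

/-- The degrees of the elements `f^α u_i` with `α` in the cube `[0, q)^d`. -/
def boxDegrees [Fintype ι] (δ : Fin d → ℕ) (a : ι → ℤ) (q : ℕ) : Finset ℤ :=
  (latticeBox d q ×ˢ Finset.univ).image (shiftedDegree δ a)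

variable {E : Set ((Fin d → ℕ) × ι)} {δ : Fin d → ℕ} {a : ι → ℤ} {A : ℕ}

lemma exists_forall_abs_le [Finite ι] (a : ι → ℤ) : ∃ A : ℕ, ∀ i, |a i| ≤ A := by
  obtain ⟨A, hA⟩ := Finite.exists_le fun i => (a i).natAbs
  exact ⟨A, fun i => by rw [← Int.natCast_natAbs]; exact_mod_cast hA i⟩

lemma dotProduct_le_of_shiftedDegree_le (hA : ∀ i, |a i| ≤ A) {n : ℕ} {x : (Fin d → ℕ) × ι}
    (hx : shiftedDegree δ a x ≤ n) : x.1 ⬝ᵥ δ ≤ n + A := by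
  have := neg_le_of_abs_le (hA x.2)
  rw [shiftedDegree] at hx
  lia

lemma finite_sublevel [Finite ι] (hδ : ∀ l, 0 < δ l) (a : ι → ℤ) (n : ℕ) :
    {x ∈ E | shiftedDegree δ a x ≤ n}.Finite := by
  obtain ⟨A, hA⟩ := exists_forall_abs_le a
  refine ((weightedSimplex δ (n + A)).finite_toSet.prod Set.finite_univ).subset fun x hx => ?_
  exact ⟨(mem_weightedSimplex hδ).2 (dotProduct_le_of_shiftedDegree_le hA hx.2), trivial⟩

variable [Fintype ι]

lemma mem_fullColumns {i : ι} : i ∈ fullColumns E ↔ ∀ α, (α, i) ∈ E := by simp [fullColumns]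

lemma mem_partialColumns {q : ℕ} {x : (Fin d → ℕ) × ι} :
    x ∈ partialColumns E q ↔ x.1 ∈ latticeBox d q ∧ x.2 ∉ fullColumns E ∧ x ∈ E := by
  simp [partialColumns, and_assoc]

lemma shiftedDegree_mem_boxDegrees {q : ℕ} {x : (Fin d → ℕ) × ι} (hx : x.1 ∈ latticeBox d q) :
    shiftedDegree δ a x ∈ boxDegrees δ a q :=
  Finset.mem_image_of_mem _ (Finset.mem_product.2 ⟨hx, Finset.mem_univ _⟩)

lemma abs_le_of_mem_boxDegrees (hA : ∀ i, |a i| ≤ A) {q : ℕ} (hq : 0 < q) {j : ℤ}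
    (hj : j ∈ boxDegrees δ a q) : |j| ≤ q * (∑ l, δ l + A : ℕ) := by
  obtain ⟨x, hx, rfl⟩ := Finset.mem_image.1 hj
  obtain ⟨hneg, hpos⟩ := abs_le.1 (hA x.2)
  have hdot := dotProduct_le_of_mem_latticeBox δ (Finset.mem_product.1 hx).1
  have hAq : A ≤ q * A := Nat.le_mul_of_pos_left A hq
  rw [shiftedDegree, abs_le]
  push_cast [mul_add] at hdot ⊢
  zify at hdot hAq
  constructor <;> lia

lemma mem_product_fullColumns_union_partialColumns [DecidableEq ι] {q : ℕ}
    {x : (Fin d → ℕ) × ι} (hx : x ∈ E) (hq : x.1 ∈ latticeBox d q) :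
    x ∈ latticeBox d q ×ˢ fullColumns E ∪ partialColumns E q := by
  simp only [Finset.mem_union, Finset.mem_product, mem_partialColumns]
  tauto

lemma tendsto_card_partialColumns_div_pow (hE : ∀ i, IsLowerSet {α | (α, i) ∈ E}) :
    Tendsto (fun q : ℕ => ((partialColumns E q).card : ℝ) / (q : ℝ) ^ d) atTop (nhds 0) := by
  classical
  have card_eq (q : ℕ) : (partialColumns E q).card =
      ∑ i ∈ (fullColumns E)ᶜ, ((latticeBox d q).filter (· ∈ {α | (α, i) ∈ E})).card := by
    rw [partialColumns, Finset.card_filter, Finset.sum_product_right]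
    simp only [Finset.card_filter, Set.mem_ofPred_eq]
  simp only [card_eq, Nat.cast_sum, Finset.sum_div]
  rw [← Finset.sum_const_zero (s := (fullColumns E)ᶜ)]
  refine tendsto_finsetSum _ fun i hi => tendsto_card_filter_latticeBox_mem_div_pow (hE i) ?_
  rw [Finset.mem_compl, mem_fullColumns] at hi
  exact fun h => hi (Set.eq_univ_iff_forall.1 h)

lemma sublevel_subset_union [DecidableEq ι] (hδ : ∀ l, 0 < δ l) (hA : ∀ i, |a i| ≤ A) (n : ℕ) :
    {x ∈ E | shiftedDegree δ a x ≤ n} ⊆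
      ↑(weightedSimplex δ (n + A) ×ˢ fullColumns E ∪ partialColumns E (n + A + 1)) := by
  rintro ⟨α, i⟩ ⟨hE, hdeg⟩
  have hα : α ⬝ᵥ δ ≤ n + A := dotProduct_le_of_shiftedDegree_le hA hdeg
  by_cases hi : i ∈ fullColumns E
  · simp [mem_weightedSimplex hδ, hα, hi]
  · have hbox : ∀ l, α l < n + A + 1 := fun l =>
      Nat.lt_succ_of_le ((le_dotProduct_of_pos hδ α l).trans hα)
    simp [mem_partialColumns, mem_latticeBox, hbox, hi, hE]

lemma ncard_sublevel_le (hδ : ∀ l, 0 < δ l) (hA : ∀ i, |a i| ≤ A) (n : ℕ) :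
    {x ∈ E | shiftedDegree δ a x ≤ n}.ncard ≤
      (fullColumns E).card * (weightedSimplex δ (n + A)).card +
        (partialColumns E (n + A + 1)).card := by
  classical
  refine (Set.ncard_le_ncard (sublevel_subset_union hδ hA n) (Finset.finite_toSet _)).trans ?_
  rw [Set.ncard_coe_finset, mul_comm, ← Finset.card_product]
  exact Finset.card_union_le _ _

lemma card_mul_card_le_ncard_sublevel (hδ : ∀ l, 0 < δ l) (hA : ∀ i, |a i| ≤ A) (n : ℕ) :
    (fullColumns E).card * (weightedSimplex δ n).card ≤
      {x ∈ E | shiftedDegree δ a x ≤ (n + A : ℕ)}.ncard := by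
  rw [mul_comm, ← Finset.card_product, ← Set.ncard_coe_finset]
  refine Set.ncard_le_ncard ?_ (finite_sublevel hδ a _)
  rintro ⟨α, i⟩ hx
  rw [Finset.mem_coe, Finset.mem_product, mem_weightedSimplex hδ, mem_fullColumns] at hx
  refine ⟨hx.2 α, ?_⟩
  rw [shiftedDegree, Nat.cast_add]
  exact add_le_add (by exact_mod_cast hx.1) (le_of_abs_le (hA i))

lemma tendsto_ncard_sublevel_div_pow (hE : ∀ i, IsLowerSet {α | (α, i) ∈ E})
    (hδ : ∀ l, 0 < δ l) (a : ι → ℤ) :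
    Tendsto (fun n : ℕ => ({x ∈ E | shiftedDegree δ a x ≤ n}.ncard : ℝ) / (n : ℝ) ^ d) atTop
      (nhds ((fullColumns E).card * (1 / d.factorial / ∏ l, (δ l : ℝ)))) := by
  obtain ⟨A, hA⟩ := exists_forall_abs_le a
  rw [← tendsto_add_div_pow_iff
    (fun n => ({x ∈ E | shiftedDegree δ a x ≤ n}.ncard : ℝ)) A]
  have simplex := (tendsto_card_weightedSimplex_div_pow hδ).const_mul ((fullColumns E).card : ℝ)
  have simplex_shift := ((tendsto_add_div_pow_iff _ (2 * A) d _).2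
    (tendsto_card_weightedSimplex_div_pow hδ)).const_mul ((fullColumns E).card : ℝ)
  have partial_shift := (tendsto_add_div_pow_iff _ (2 * A + 1) d _).2
    (tendsto_card_partialColumns_div_pow hE)
  refine tendsto_of_tendsto_of_tendsto_of_le_of_le simplex
    (by simpa only [add_zero] using simplex_shift.add partial_shift) (fun n => ?_) (fun n => ?_)
  · rw [← mul_div_assoc]
    gcongr
    exact_mod_cast card_mul_card_le_ncard_sublevel hδ hA n
  · rw [← mul_div_assoc, ← add_div]
    gcongr
    have upper := ncard_sublevel_le (E := E) hδ hA (n + A)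
    rw [add_assoc n, ← two_mul, add_assoc n] at upper
    rw [← Nat.cast_mul, ← Nat.cast_add]
    exact Nat.cast_le.2 upper

end Columns

section StandardSet

variable {k V X Γ : Type*} [Field k] [AddCommGroup V] [Module k V] [LinearOrder Γ]

/-- The indices `x` for which `v x` is not a linear combination of the vectors of smaller key `φ`.
When `φ` is injective these index the basis selected greedily from `v`. -/
def standardSet (k : Type*) {V X Γ : Type*} [Field k] [AddCommGroup V] [Module k V] [LinearOrder Γ]
    (φ : X → Γ) (v : X → V) : Set X :=
  {x | v x ∉ Submodule.span k (v '' {y | φ y < φ x})}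

lemma mem_standardSet {φ : X → Γ} {v : X → V} {x : X} :
    x ∈ standardSet k φ v ↔ v x ∉ Submodule.span k (v '' {y | φ y < φ x}) :=
  Iff.rfl

lemma span_image_standardSet [WellFoundedLT Γ] (φ : X → Γ) (v : X → V) :
    Submodule.span k (v '' standardSet k φ v) = Submodule.span k (Set.range v) := by
  refine le_antisymm (Submodule.span_mono (Set.image_subset_range _ _)) (Submodule.span_le.2 ?_)
  rintro _ ⟨x, rfl⟩
  induction x using (InvImage.wf φ wellFounded_lt).induction with
  | _ x ih =>
    by_cases hx : x ∈ standardSet k φ v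
    · exact Submodule.subset_span ⟨x, hx, rfl⟩
    · rw [mem_standardSet, not_not] at hx
      exact Submodule.span_le.2 (Set.image_subset_iff.2 ih) hx

lemma linearIndepOn_standardSet {φ : X → Γ} (hφ : Function.Injective φ) (v : X → V) :
    LinearIndepOn k v (standardSet k φ v) := by
  classical
  refine linearIndepOn_of_finite _ fun t ht htfin => ?_
  lift t to Finset X using htfin
  induction t using Finset.induction_on_max_value φ with
  | empty => simp
  | insert x s hxs hmax ih =>
    rw [Finset.coe_insert] at ht ⊢
    obtain ⟨hx, hs⟩ := Set.insert_subset_iff.1 ht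
    refine (linearIndepOn_insert (Finset.mem_coe.not.2 hxs)).2 ⟨ih hs, fun hmem => hx ?_⟩
    refine Submodule.span_mono (Set.image_mono fun y hy => ?_) hmem
    exact (hmax y hy).lt_of_ne (hφ.ne (ne_of_mem_of_not_mem hy hxs))

lemma mem_standardSet_of_apply_mem {φ : X → Γ} {v : X → V} {g : X → X} {T : V →ₗ[k] V}
    (hg : ∀ x y, φ y < φ x → φ (g y) < φ (g x)) (hT : ∀ x, T (v x) = v (g x)) {x : X}
    (hx : g x ∈ standardSet k φ v) : x ∈ standardSet k φ v := by
  refine fun hmem => hx ?_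
  rw [← hT]
  refine Submodule.span_mono ?_ (Submodule.map_span T _ ▸ Submodule.mem_map_of_mem hmem)
  rintro _ ⟨_, ⟨y, hy, rfl⟩, rfl⟩
  exact ⟨g y, hg x y hy, (hT y).symm⟩

lemma finrank_span_image_eq_ncard {v : X → V} {s : Set X} (hs : LinearIndepOn k v s) :
    Module.finrank k (Submodule.span k (v '' s)) = s.ncard := by
  rw [Set.image_eq_range, Module.finrank_eq_nat_card_basis (Module.Basis.span hs),
    Nat.card_coe_set_eq]

lemma finrank_finsetSup_le [Module.Finite k V] (s : Finset X) (W : X → Submodule k V) :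
    Module.finrank k ↥(s.sup W) ≤ ∑ x ∈ s, Module.finrank k (W x) := by
  induction s using Finset.cons_induction with
  | empty => simp
  | cons x s hx ih =>
    rw [Finset.sup_cons, Finset.sum_cons]
    exact (Submodule.finrank_add_le_finrank_add_finrank _ _).trans (Nat.add_le_add_left ih _)

end StandardSet

section GradedVectorSpace

variable {k V J X : Type*} [Field k] [AddCommGroup V] [Module k V] [DecidableEq J]
  (𝒜 : J → Submodule k V) [DirectSum.Decomposition 𝒜]

lemma coe_decompose_mem_span_image {v : X → V} {deg : X → J} (hv : ∀ x, v x ∈ 𝒜 (deg x))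
    {E : Set X} (j : J) {z : V} (hz : z ∈ Submodule.span k (v '' E)) :
    (DirectSum.decompose 𝒜 z j : V) ∈ Submodule.span k (v '' {x ∈ E | deg x = j}) := by
  induction hz using Submodule.span_induction with
  | mem z hz =>
    obtain ⟨x, hx, rfl⟩ := hz
    by_cases h : deg x = j
    · rw [DirectSum.decompose_of_mem_same 𝒜 (h ▸ hv x)]
      exact Submodule.subset_span ⟨x, ⟨hx, h⟩, rfl⟩
    · rw [DirectSum.decompose_of_mem_ne 𝒜 (hv x) h]
      exact Submodule.zero_mem _
  | zero => simp
  | add z z' _ _ hz hz' => simpa using Submodule.add_mem _ hz hz'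
  | smul c z _ hz => simpa [DirectSum.smul_apply] using Submodule.smul_mem _ c hz

lemma eq_span_image_of_span_eq_top {v : X → V} {deg : X → J} (hv : ∀ x, v x ∈ 𝒜 (deg x))
    {E : Set X} (hE : Submodule.span k (v '' E) = ⊤) (j : J) :
    𝒜 j = Submodule.span k (v '' {x ∈ E | deg x = j}) := by
  refine le_antisymm (fun z hz => ?_) (Submodule.span_le.2 ?_)
  · have := coe_decompose_mem_span_image 𝒜 hv j (hE ▸ Submodule.mem_top (x := z))
    rwa [DirectSum.decompose_of_mem_same 𝒜 hz] at this
  · rintro _ ⟨x, ⟨_, rfl⟩, rfl⟩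
    exact hv x

lemma finrank_eq_ncard_of_linearIndepOn {v : X → V} {deg : X → J} (hv : ∀ x, v x ∈ 𝒜 (deg x))
    {E : Set X} (hE : Submodule.span k (v '' E) = ⊤) (hli : LinearIndepOn k v E) (j : J) :
    Module.finrank k (𝒜 j) = {x ∈ E | deg x = j}.ncard := by
  rw [eq_span_image_of_span_eq_top 𝒜 hv hE j,
    finrank_span_image_eq_ncard (hli.mono (Set.sep_subset _ _))]

lemma exists_homogeneous_span_sup_eq_top (N : Submodule k V) [Module.Finite k (V ⧸ N)] :
    ∃ (u : Fin (Module.finrank k (V ⧸ N)) → V) (a : Fin (Module.finrank k (V ⧸ N)) → J),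
      (∀ i, u i ∈ 𝒜 (a i)) ∧ Submodule.span k (Set.range u) ⊔ N = ⊤ := by
  let w : (Σ j, 𝒜 j) → V ⧸ N := fun x => N.mkQ x.2
  have hw : Submodule.span k (Set.range w) = ⊤ := by
    have hhom : Submodule.span k (Set.range fun x : Σ j, 𝒜 j => (x.2 : V)) = ⊤ := by
      rw [← top_le_iff, ← (DirectSum.Decomposition.isInternal 𝒜).submodule_iSup_eq_top]
      exact iSup_le fun j z hz => Submodule.subset_span ⟨⟨j, z, hz⟩, rfl⟩
    rw [← N.range_mkQ, LinearMap.range_eq_map, ← hhom, Submodule.map_span, ← Set.range_comp]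
    rfl
  obtain ⟨κ, c, -, hspan, hli⟩ := exists_linearIndependent' k w
  let b : Module.Basis κ k (V ⧸ N) := .mk hli (hspan.trans hw).ge
  let idx := (Module.finBasis k (V ⧸ N)).indexEquiv b
  refine ⟨fun i => (c (idx i)).2, fun i => (c (idx i)).1, fun i => (c (idx i)).2.2, ?_⟩
  rw [sup_comm, ← Submodule.map_mkQ_eq_top, Submodule.map_span, ← Set.range_comp, ← hw, ← hspan,
    ← idx.surjective.range_comp]
  rfl

end GradedVectorSpace

section GradedRing

variable {k R : Type*} [Field k] [CommRing R] [Algebra k R] {d : ℕ} {ι : Type*}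

/-- The element `f^α u_i` indexed by `x = (α, i)`. -/
def monomialMul (f : Fin d → R) (u : ι → R) (x : (Fin d → ℕ) × ι) : R :=
  (∏ l, f l ^ x.1 l) * u x.2

lemma monomialMul_add (f : Fin d → R) (u : ι → R) (α β : Fin d → ℕ) (i : ι) :
    monomialMul f u (α + β, i) = (∏ l, f l ^ α l) * monomialMul f u (β, i) := by
  simp only [monomialMul, Pi.add_apply, pow_add, Finset.prod_mul_distrib, mul_assoc]

lemma monomialMul_mem_of_notMem_latticeBox (f : Fin d → R) (u : ι → R) {q : ℕ}
    {x : (Fin d → ℕ) × ι} (hx : x.1 ∉ latticeBox d q) :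
    monomialMul f u x ∈ Ideal.span (Set.range (f ^ q)) := by
  simp only [mem_latticeBox, not_forall, not_lt] at hx
  obtain ⟨l, hl⟩ := hx
  have hdvd : f l ^ q ∣ ∏ l, f l ^ x.1 l :=
    (pow_dvd_pow _ hl).trans (Finset.dvd_prod_of_mem (fun l => f l ^ x.1 l) (Finset.mem_univ l))
  exact Ideal.mem_of_dvd _ (hdvd.mul_right _) (Ideal.subset_span ⟨l, rfl⟩)

lemma map_span_monomialMul_le (f : Fin d → R) (u : ι → R) (E : Set ((Fin d → ℕ) × ι)) (q : ℕ) :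
    (Submodule.span k (monomialMul f u '' E)).map
        ((Ideal.span (Set.range (f ^ q))).mkQ.restrictScalars k) ≤
      Submodule.span k ((fun x => (Ideal.span (Set.range (f ^ q))).mkQ (monomialMul f u x)) ''
        {x ∈ E | x.1 ∈ latticeBox d q}) := by
  rw [Submodule.map_span_le]
  rintro _ ⟨x, hx, rfl⟩
  by_cases hq : x.1 ∈ latticeBox d q
  · exact Submodule.subset_span ⟨x, ⟨hx, hq⟩, rfl⟩
  · rw [LinearMap.restrictScalars_apply, Submodule.mkQ_apply,
      (Submodule.Quotient.mk_eq_zero _).2 (monomialMul_mem_of_notMem_latticeBox f u hq)]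
    exact Submodule.zero_mem _

variable (𝒜 : ℤ → Submodule k R) {f : Fin d → R} {δ : Fin d → ℕ}

/-- A `k`-basis of `R` made of elements `f^α u_i` with homogeneous `u_i`, such that the exponents
`α` occurring with a given `u_i` are closed under passing to divisors. -/
structure StandardMonomialBasis (f : Fin d → R) (m : ℕ) where
  gen : Fin m → R
  genDegree : Fin m → ℤ
  gen_mem : ∀ i, gen i ∈ 𝒜 (genDegree i)
  support : Set ((Fin d → ℕ) × Fin m)
  isLowerSet_column : ∀ i, IsLowerSet {α | (α, i) ∈ support}
  linearIndepOn : LinearIndepOn k (monomialMul f gen) support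
  span_eq_top : Submodule.span k (monomialMul f gen '' support) = ⊤

variable {𝒜} {m : ℕ}

/-- The number of full columns of the support, which is the rank of `R` as a module over the
polynomial ring in `f`. -/
def StandardMonomialBasis.rank (b : StandardMonomialBasis 𝒜 f m) : ℕ :=
  (fullColumns b.support).card

lemma StandardMonomialBasis.rank_le (b : StandardMonomialBasis 𝒜 f m) : b.rank ≤ m :=
  (Finset.card_le_univ _).trans_eq (Fintype.card_fin m)

lemma StandardMonomialBasis.finite_quotient_pow (b : StandardMonomialBasis 𝒜 f m) (q : ℕ) :
    Module.Finite k (R ⧸ Ideal.span (Set.range (f ^ q))) := by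
  have hfin : {x ∈ b.support | x.1 ∈ latticeBox d q}.Finite :=
    ((latticeBox d q).finite_toSet.prod Set.finite_univ).subset fun x hx => ⟨hx.2, trivial⟩
  have htop := map_span_monomialMul_le (k := k) f b.gen b.support q
  rw [b.span_eq_top, Submodule.map_top, LinearMap.range_restrictScalars, Submodule.range_mkQ]
    at htop
  exact ⟨top_le_iff.1 htop ▸ Submodule.fg_span (hfin.image _)⟩

variable (𝒜) [GradedAlgebra 𝒜]

lemma monomialMul_mem (hf : ∀ l, f l ∈ 𝒜 (δ l)) {u : ι → R} {a : ι → ℤ}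
    (hu : ∀ i, u i ∈ 𝒜 (a i)) (x : (Fin d → ℕ) × ι) :
    monomialMul f u x ∈ 𝒜 (shiftedDegree δ a x) := by
  refine SetLike.mul_mem_graded ?_ (hu x.2)
  have hdeg : ((x.1 ⬝ᵥ δ : ℕ) : ℤ) = ∑ l, x.1 l • (δ l : ℤ) := by simp [dotProduct]
  rw [hdeg]
  exact SetLike.prod_mem_graded _ _ _ fun l _ => SetLike.pow_mem_graded _ (hf l)

lemma coe_decompose_mul_of_right_mem {b : R} {i : ℤ} (hb : b ∈ 𝒜 i) (a : R) (j : ℤ) :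
    (DirectSum.decompose 𝒜 (a * b) j : R) = DirectSum.decompose 𝒜 a (j - i) * b := by
  rw [← DirectSum.coe_decompose_mul_add_of_right_mem 𝒜 hb, sub_add_cancel]

lemma eq_top_of_mul_mem (hneg : ∀ t : ℤ, t < 0 → 𝒜 t = ⊥) (hδ : ∀ l, 0 < δ l)
    (hf : ∀ l, f l ∈ 𝒜 (δ l)) {u : ι → R} {a : ι → ℤ} (hu : ∀ i, u i ∈ 𝒜 (a i))
    (htop : Submodule.span k (Set.range u) ⊔ (Ideal.span (Set.range f)).restrictScalars k = ⊤)
    {P : Submodule k R} (huP : ∀ i, u i ∈ P) (hfP : ∀ l, ∀ z ∈ P, z * f l ∈ P) : P = ⊤ := by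
  have coe_decompose_mem (n : ℕ) : ∀ j < (n : ℤ), ∀ z, (DirectSum.decompose 𝒜 z j : R) ∈ P := by
    induction n with
    | zero =>
      intro j hj z
      exact ((hneg j hj).le.trans bot_le) (DirectSum.decompose 𝒜 z j).2
    | succ n ih =>
      intro j hj z
      obtain ⟨s, hs, r, hr, rfl⟩ := Submodule.mem_sup.1 (htop ▸ Submodule.mem_top (x := z))
      obtain ⟨c, rfl⟩ := Ideal.mem_span_range_iff_exists_fun.1 hr
      rw [DirectSum.decompose_add, DirectSum.decompose_sum]
      simp only [DirectSum.add_apply, DirectSum.sum_apply, Submodule.coe_add,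
        AddSubmonoidClass.coe_finsetSum, coe_decompose_mul_of_right_mem 𝒜 (hf _)]
      refine P.add_mem ?_ (P.sum_mem fun l _ => hfP l _ (ih _ ?_ _))
      · rw [← Set.image_univ] at hs
        refine Submodule.span_le.2 ?_ (coe_decompose_mem_span_image 𝒜 hu j hs)
        exact Set.image_subset_iff.2 fun i _ => huP i
      · have := hδ l
        lia
  classical
  refine (Submodule.eq_top_iff').2 fun z => ?_
  rw [← DirectSum.sum_support_decompose 𝒜 z]
  exact P.sum_mem fun j _ => coe_decompose_mem (j.toNat + 1) j (by lia) z

lemma span_range_monomialMul_eq_top (hneg : ∀ t : ℤ, t < 0 → 𝒜 t = ⊥) (hδ : ∀ l, 0 < δ l)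
    (hf : ∀ l, f l ∈ 𝒜 (δ l)) {u : ι → R} {a : ι → ℤ} (hu : ∀ i, u i ∈ 𝒜 (a i))
    (htop : Submodule.span k (Set.range u) ⊔ (Ideal.span (Set.range f)).restrictScalars k = ⊤) :
    Submodule.span k (Set.range (monomialMul f u)) = ⊤ := by
  refine eq_top_of_mul_mem 𝒜 hneg hδ hf hu htop (fun i => ?_) (fun l z hz => ?_)
  · exact Submodule.subset_span ⟨(0, i), by simp [monomialMul]⟩
  · induction hz using Submodule.span_induction with
    | mem z hz =>
      obtain ⟨⟨α, i⟩, rfl⟩ := hz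
      refine Submodule.subset_span ⟨(Pi.single l 1 + α, i), ?_⟩
      simp [monomialMul_add, Pi.single_apply, pow_ite, mul_comm]
    | zero => simp
    | add z z' _ _ hz hz' => simpa only [add_mul] using Submodule.add_mem _ hz hz'
    | smul c z _ hz => simpa only [smul_mul_assoc] using Submodule.smul_mem _ c hz

/-- The key for which `standardSet` selects the standard monomials: exponents are compared first,
and lexicographically, so that multiplication by a monomial is strictly monotone. -/
def monomialKey (x : (Fin d → ℕ) × Fin m) : Lex (Lex (Fin d → ℕ) × Fin m) :=
  toLex (toLex x.1, x.2)

lemma monomialKey_injective :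
    Function.Injective (monomialKey : (Fin d → ℕ) × Fin m → _) :=
  toLex.injective.comp (toLex.injective.prodMap Function.injective_id)

lemma monomialKey_add_lt (γ : Fin d → ℕ) {x y : (Fin d → ℕ) × Fin m}
    (h : monomialKey y < monomialKey x) :
    monomialKey (γ + y.1, y.2) < monomialKey (γ + x.1, x.2) := by
  simp only [monomialKey, Prod.Lex.toLex_lt_toLex, toLex_add] at h ⊢
  exact h.imp (add_lt_add_right · _) (And.imp_left (congrArg _))

lemma isLowerSet_column_standardSet (k : Type*) [Field k] [Algebra k R] (f : Fin d → R)
    (u : Fin m → R) (i : Fin m) :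
    IsLowerSet {α | (α, i) ∈ standardSet k monomialKey (monomialMul f u)} := by
  intro β α hαβ hβ
  obtain ⟨γ, rfl⟩ := exists_add_of_le hαβ
  rw [Set.mem_ofPred_eq, add_comm α γ] at hβ
  exact mem_standardSet_of_apply_mem (g := fun x => (γ + x.1, x.2))
    (T := LinearMap.mulLeft k (∏ l, f l ^ γ l)) (fun _ _ => monomialKey_add_lt γ)
    (fun x => (monomialMul_add f u γ x.1 x.2).symm) hβ

lemma nonempty_standardMonomialBasis (hneg : ∀ t : ℤ, t < 0 → 𝒜 t = ⊥) (hδ : ∀ l, 0 < δ l)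
    (hf : ∀ l, f l ∈ 𝒜 (δ l)) [Module.Finite k (R ⧸ Ideal.span (Set.range f))] :
    Nonempty (StandardMonomialBasis 𝒜 f (Module.finrank k (R ⧸ Ideal.span (Set.range f)))) := by
  have : Module.Finite k (R ⧸ (Ideal.span (Set.range f)).restrictScalars k) :=
    ‹Module.Finite k (R ⧸ Ideal.span (Set.range f))›
  obtain ⟨u, a, hu, htop⟩ :=
    exists_homogeneous_span_sup_eq_top 𝒜 ((Ideal.span (Set.range f)).restrictScalars k)
  exact ⟨{
    gen := u
    genDegree := a
    gen_mem := hu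
    support := standardSet k monomialKey (monomialMul f u)
    isLowerSet_column := isLowerSet_column_standardSet k f u
    linearIndepOn := linearIndepOn_standardSet monomialKey_injective _
    span_eq_top := (span_image_standardSet _ _).trans
      (span_range_monomialMul_eq_top 𝒜 hneg hδ hf hu htop) }⟩

namespace StandardMonomialBasis

variable {𝒜} (b : StandardMonomialBasis 𝒜 f m)

lemma finrank_eq_ncard (hf : ∀ l, f l ∈ 𝒜 (δ l)) (j : ℤ) : Module.finrank k (𝒜 j) =
    {x ∈ b.support | shiftedDegree δ b.genDegree x = j}.ncard :=
  finrank_eq_ncard_of_linearIndepOn 𝒜 (monomialMul_mem 𝒜 hf b.gen_mem) b.span_eq_top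
    b.linearIndepOn j

lemma tsum_finrank_eq_ncard (hδ : ∀ l, 0 < δ l) (hf : ∀ l, f l ∈ 𝒜 (δ l)) (n : ℕ) :
    ∑' j : ℤ, (if j ≤ (n : ℤ) then (Module.finrank k (𝒜 j) : ℝ) else 0) =
      {x ∈ b.support | shiftedDegree δ b.genDegree x ≤ n}.ncard := by
  classical
  let deg := shiftedDegree δ b.genDegree
  have hfin : {x ∈ b.support | deg x ≤ n}.Finite := finite_sublevel hδ _ n
  have fiber (j : ℤ) : (if j ≤ (n : ℤ) then (Module.finrank k (𝒜 j) : ℝ) else 0) =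
      (hfin.toFinset.filter (deg · = j)).card := by
    split_ifs with hj
    · rw [b.finrank_eq_ncard hf, ← Set.ncard_coe_finset]
      congr 2
      ext x
      simp only [Finset.coe_filter, Set.Finite.mem_toFinset, Set.mem_ofPred_eq]
      exact ⟨fun hx => ⟨⟨hx.1, hx.2.trans_le hj⟩, hx.2⟩, fun hx => ⟨hx.1.1, hx.2⟩⟩
    · rw [Finset.filter_false_of_mem, Finset.card_empty, Nat.cast_zero]
      rintro x hx rfl
      exact hj (hfin.mem_toFinset.1 hx).2
  rw [tsum_congr fiber, tsum_eq_sum (s := hfin.toFinset.image deg), ← Nat.cast_sum,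
    ← Finset.card_eq_sum_card_image, Set.ncard_eq_toFinset_card _ hfin]
  intro j hj
  rw [Finset.filter_false_of_mem, Finset.card_empty, Nat.cast_zero]
  exact fun x hx hxj => hj (Finset.mem_image.2 ⟨x, hx, hxj⟩)

lemma tendsto_hsSeq (hδ : ∀ l, 0 < δ l) (hf : ∀ l, f l ∈ 𝒜 (δ l)) :
    Tendsto (hsSeq k 𝒜 d) atTop (nhds (b.rank / ∏ l, (δ l : ℝ))) := by
  have limit := (tendsto_ncard_sublevel_div_pow b.isLowerSet_column hδ b.genDegree).const_mul
    (d.factorial : ℝ)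
  convert limit using 1
  · ext n
    rw [hsSeq, b.tsum_finrank_eq_ncard hδ hf]
    ring
  · rw [rank]
    field_simp

lemma quotPieceDim_le (hf : ∀ l, f l ∈ 𝒜 (δ l)) (q : ℕ) (j : ℤ) :
    quotPieceDim k 𝒜 (Ideal.span (Set.range (f ^ q))) j ≤
      ((latticeBox d q ×ˢ fullColumns b.support).filter
        (shiftedDegree δ b.genDegree · = j)).card +
      ((partialColumns b.support q).filter (shiftedDegree δ b.genDegree · = j)).card := by
  classical
  let cls := fun x => (Ideal.span (Set.range (f ^ q))).mkQ (monomialMul f b.gen x)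
  let F := (latticeBox d q ×ˢ fullColumns b.support ∪ partialColumns b.support q).filter
    (shiftedDegree δ b.genDegree · = j)
  have map_le : (𝒜 j).map ((Ideal.span (Set.range (f ^ q))).mkQ.restrictScalars k) ≤
      Submodule.span k (F.image cls : Set (R ⧸ Ideal.span (Set.range (f ^ q)))) := by
    rw [eq_span_image_of_span_eq_top 𝒜 (monomialMul_mem 𝒜 hf b.gen_mem) b.span_eq_top j,
      Finset.coe_image]
    refine (map_span_monomialMul_le f b.gen _ q).trans (Submodule.span_mono (Set.image_mono ?_))
    rintro x ⟨⟨hx, hxj⟩, hq⟩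
    exact Finset.mem_filter.2 ⟨mem_product_fullColumns_union_partialColumns hx hq, hxj⟩
  calc quotPieceDim k 𝒜 (Ideal.span (Set.range (f ^ q))) j
      ≤ (F.image cls).card :=
        (Submodule.finrank_mono map_le).trans (finrank_span_finset_le_card _)
    _ ≤ F.card := Finset.card_image_le
    _ ≤ _ := by
        simpa only [F, Finset.filter_union] using Finset.card_union_le _ _

lemma quotPieceDim_eq_zero (hf : ∀ l, f l ∈ 𝒜 (δ l)) {q : ℕ} {j : ℤ}
    (hj : j ∉ boxDegrees δ b.genDegree q) :
    quotPieceDim k 𝒜 (Ideal.span (Set.range (f ^ q))) j = 0 := by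
  refine Nat.eq_zero_of_le_zero ((b.quotPieceDim_le hf q j).trans_eq ?_)
  rw [Finset.filter_false_of_mem, Finset.filter_false_of_mem, Finset.card_empty]
  · rintro x hx rfl
    exact hj (shiftedDegree_mem_boxDegrees (mem_partialColumns.1 hx).1)
  · rintro x hx rfl
    exact hj (shiftedDegree_mem_boxDegrees (Finset.mem_product.1 hx).1)

lemma finrank_quotient_pow_le (hf : ∀ l, f l ∈ 𝒜 (δ l)) (q : ℕ) :
    Module.finrank k (R ⧸ Ideal.span (Set.range (f ^ q))) ≤
      ∑ j ∈ boxDegrees δ b.genDegree q,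
        quotPieceDim k 𝒜 (Ideal.span (Set.range (f ^ q))) j := by
  have := b.finite_quotient_pow q
  let π := (Ideal.span (Set.range (f ^ q))).mkQ.restrictScalars k
  have range_eq_top : LinearMap.range π = ⊤ := by
    rw [LinearMap.range_restrictScalars, Submodule.range_mkQ, Submodule.restrictScalars_top]
  have sup_eq_top : (boxDegrees δ b.genDegree q).sup (fun j => (𝒜 j).map π) = ⊤ := by
    rw [← top_le_iff, ← range_eq_top,
      ← Submodule.map_top,
      ← (DirectSum.Decomposition.isInternal 𝒜).submodule_iSup_eq_top, Submodule.map_iSup]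
    refine iSup_le fun j => ?_
    by_cases hj : j ∈ boxDegrees δ b.genDegree q
    · exact Finset.le_sup (f := fun j => (𝒜 j).map π) hj
    · exact (Submodule.finrank_eq_zero.1 (b.quotPieceDim_eq_zero hf hj)).le.trans bot_le
  rw [← finrank_top, ← sup_eq_top]
  exact finrank_finsetSup_le _ _

lemma rank_mul_pow_le_finrank (hneg : ∀ t : ℤ, t < 0 → 𝒜 t = ⊥) (hδ : ∀ l, 0 < δ l)
    (hf : ∀ l, f l ∈ 𝒜 (δ l)) {q : ℕ} (hq : 0 < q) :
    b.rank * q ^ d ≤ Module.finrank k (R ⧸ Ideal.span (Set.range (f ^ q))) := by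
  have := b.finite_quotient_pow q
  have hδq : ∀ l, 0 < (q • δ) l := fun l => Nat.mul_pos hq (hδ l)
  have hfq : ∀ l, (f ^ q) l ∈ 𝒜 ((q • δ) l : ℕ) := fun l => by
    simpa using SetLike.pow_mem_graded q (hf l)
  obtain ⟨b'⟩ := nonempty_standardMonomialBasis 𝒜 hneg hδq hfq
  have hprod : (∏ l, (δ l : ℝ)) ≠ 0 :=
    Finset.prod_ne_zero_iff.2 fun l _ => Nat.cast_ne_zero.2 (hδ l).ne'
  have hq' : (q : ℝ) ≠ 0 := Nat.cast_ne_zero.2 hq.ne'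
  have same_limit := tendsto_nhds_unique (b.tendsto_hsSeq hδ hf) (b'.tendsto_hsSeq hδq hfq)
  simp only [Pi.smul_apply, smul_eq_mul, Nat.cast_mul, Finset.prod_mul_distrib,
    Finset.prod_const, Finset.card_univ, Fintype.card_fin] at same_limit
  rw [div_eq_div_iff hprod (mul_ne_zero (pow_ne_zero d hq') hprod), ← mul_assoc] at same_limit
  have rank_mul_pow : (b.rank * q ^ d : ℝ) = b'.rank := mul_right_cancel₀ hprod same_limit
  exact (Nat.cast_injective (R := ℝ) (by exact_mod_cast rank_mul_pow)).trans_le b'.rank_le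

lemma rank_mul_pow_le_sum_quotPieceDim (hneg : ∀ t : ℤ, t < 0 → 𝒜 t = ⊥) (hδ : ∀ l, 0 < δ l)
    (hf : ∀ l, f l ∈ 𝒜 (δ l)) {q : ℕ} (hq : 0 < q) :
    b.rank * q ^ d ≤ ∑ j ∈ boxDegrees δ b.genDegree q,
      quotPieceDim k 𝒜 (Ideal.span (Set.range (f ^ q))) j :=
  (b.rank_mul_pow_le_finrank hneg hδ hf hq).trans (b.finrank_quotient_pow_le hf q)

end StandardMonomialBasis

end GradedRing

section ExponentialSums

/-- The coefficient `e^{-iyj/q}` of the degree `j` term in `FnGen`. -/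
def frobeniusWeight (y : ℂ) (q : ℕ) (j : ℤ) : ℂ := Complex.exp (-Complex.I * y * j / q)

lemma norm_frobeniusWeight_le (y : ℂ) {q C : ℕ} (hq : 0 < q) {j : ℤ} (hj : |j| ≤ q * C) :
    ‖frobeniusWeight y q j‖ ≤ Real.exp (‖y‖ * C) := by
  refine (Complex.norm_exp_le_exp_norm _).trans (Real.exp_le_exp.2 ?_)
  have hq : (0 : ℝ) < q := Nat.cast_pos.2 hq
  have hj : |(j : ℝ)| ≤ C * q := by
    rw [mul_comm]
    exact_mod_cast hj
  simp only [norm_div, norm_mul, norm_neg, Complex.norm_I, one_mul, Complex.norm_natCast,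
    Complex.norm_intCast, mul_div_assoc]
  gcongr
  exact (div_le_iff₀ hq).2 hj

lemma tendsto_mul_exp_div_sub_one (w : ℂ) :
    Tendsto (fun q : ℕ => (q : ℂ) * (Complex.exp (w / q) - 1)) atTop (nhds w) := by
  have hderiv : HasDerivAt (fun t : ℂ => Complex.exp (w * t)) w 0 := by
    simpa using ((hasDerivAt_id (0 : ℂ)).const_mul w).cexp
  have hinv : Tendsto (fun q : ℕ => (q : ℂ)⁻¹) atTop (nhdsWithin 0 {0}ᶜ) :=
    tendsto_nhdsWithin_iff.2 ⟨tendsto_inv_atTop_nhds_zero_nat,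
      (eventually_gt_atTop 0).mono fun q hq => by simp [hq.ne']⟩
  refine (hderiv.tendsto_slope_zero.comp hinv).congr fun q => ?_
  simp [div_eq_mul_inv]

lemma tendsto_inv_mul_sum_exp {w : ℂ} (hw : w ≠ 0) :
    Tendsto (fun q : ℕ => (1 / (q : ℂ)) * ∑ α ∈ Finset.range q, Complex.exp (w * α / q)) atTop
      (nhds ((Complex.exp w - 1) / w)) := by
  have hlim := tendsto_mul_exp_div_sub_one w
  refine (tendsto_const_nhds.div hlim hw).congr' ?_
  filter_upwards [hlim.eventually_ne hw, eventually_gt_atTop 0] with q hne hq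
  have hq : (q : ℂ) ≠ 0 := Nat.cast_ne_zero.2 hq.ne'
  have hratio : Complex.exp (w / q) ≠ 1 := fun h => hne (by rw [h, sub_self, mul_zero])
  have geometric : ∑ α ∈ Finset.range q, Complex.exp (w * α / q) =
      ∑ α ∈ Finset.range q, Complex.exp (w / q) ^ α := by
    refine Finset.sum_congr rfl fun α _ => ?_
    rw [← Complex.exp_nat_mul]
    ring_nf
  rw [geometric, geom_sum_eq hratio, ← Complex.exp_nat_mul, mul_div_cancel₀ _ hq,
    div_mul_div_comm, one_mul, Pi.div_apply]

variable {d : ℕ} {ι : Type*}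

lemma sum_frobeniusWeight_shiftedDegree (δ : Fin d → ℕ) (a : ι → ℤ) (B : Finset ι) (y : ℂ)
    (q : ℕ) :
    ∑ x ∈ latticeBox d q ×ˢ B, frobeniusWeight y q (shiftedDegree δ a x) =
      (∏ l, ∑ α ∈ Finset.range q, Complex.exp (-Complex.I * δ l * y * α / q)) *
        ∑ i ∈ B, frobeniusWeight y q (a i) := by
  rw [Finset.prod_univ_sum, Finset.sum_mul_sum, Finset.sum_product]
  refine Finset.sum_congr rfl fun α _ => Finset.sum_congr rfl fun i _ => ?_
  rw [← Complex.exp_sum, frobeniusWeight, frobeniusWeight, ← Complex.exp_add, ← Finset.sum_div,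
    ← add_div, shiftedDegree, dotProduct]
  push_cast
  rw [mul_add, Finset.mul_sum]
  congr 3
  exact Finset.sum_congr rfl fun l _ => by ring

lemma tendsto_sum_frobeniusWeight_shiftedDegree {δ : Fin d → ℕ} (hδ : ∀ l, 0 < δ l)
    (a : ι → ℤ) (B : Finset ι) {y : ℂ} (hy : y ≠ 0) :
    Tendsto (fun q : ℕ => (1 / (q : ℂ)) ^ d *
        ∑ x ∈ latticeBox d q ×ˢ B, frobeniusWeight y q (shiftedDegree δ a x)) atTop
      (nhds ((B.card / ∏ l, (δ l : ℝ) : ℝ) *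
        ∏ l, (1 - Complex.exp (-Complex.I * δ l * y)) / (Complex.I * y))) := by
  have shifts : Tendsto (fun q : ℕ => ∑ i ∈ B, frobeniusWeight y q (a i)) atTop
      (nhds (∑ _i ∈ B, 1)) := by
    refine tendsto_finsetSum _ fun i _ => ?_
    rw [← Complex.exp_zero]
    exact (Complex.continuous_exp.tendsto 0).comp (tendsto_const_div_atTop_nhds_zero_nat _)
  have hw (l : Fin d) : -Complex.I * δ l * y ≠ 0 := by simp [hy, (hδ l).ne']
  convert (tendsto_finsetProd Finset.univ fun l _ => tendsto_inv_mul_sum_exp (hw l)).mul shifts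
    using 1
  · ext q
    rw [sum_frobeniusWeight_shiftedDegree, Finset.prod_mul_distrib, Finset.prod_const,
      Finset.card_univ, Fintype.card_fin, mul_assoc]
  · congr 1
    have factor (l : Fin d) : (Complex.exp (-Complex.I * δ l * y) - 1) / (-Complex.I * δ l * y) =
        (1 - Complex.exp (-Complex.I * δ l * y)) / (Complex.I * y) / δ l := by
      rw [div_div, ← neg_div_neg_eq]
      ring_nf
    simp only [factor, Finset.prod_div_distrib, Finset.sum_const, nsmul_eq_mul, mul_one]
    push_cast
    ring

lemma norm_sum_mul_sub_sum_mul_le {J : Type*} (s : Finset J) {a b c : J → ℕ}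
    (habc : ∀ j ∈ s, a j ≤ b j + c j) (hba : ∑ j ∈ s, b j ≤ ∑ j ∈ s, a j) {w : J → ℂ} {C : ℝ}
    (hw : ∀ j ∈ s, ‖w j‖ ≤ C) (hC : 0 ≤ C) :
    ‖∑ j ∈ s, a j * w j - ∑ j ∈ s, b j * w j‖ ≤ C * (2 * ∑ j ∈ s, c j : ℕ) := by
  have pointwise (j : J) (hj : j ∈ s) :
      ‖a j * w j - b j * w j‖ ≤ C * (2 * c j - (a j - b j)) := by
    have h : (a j : ℝ) ≤ b j + c j := by exact_mod_cast habc j hj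
    have hnorm : ‖(a j - b j : ℂ)‖ = |(a j - b j : ℝ)| := by
      simpa only [Complex.ofReal_sub, Complex.ofReal_natCast, Real.norm_eq_abs] using
        Complex.norm_real (a j - b j : ℝ)
    rw [← sub_mul, norm_mul, mul_comm, hnorm]
    refine mul_le_mul (hw j hj) (abs_le.2 ⟨?_, ?_⟩) (abs_nonneg _) hC <;>
      linarith [(c j).cast_nonneg (α := ℝ)]
  have hba : ∑ j ∈ s, (b j : ℝ) ≤ ∑ j ∈ s, (a j : ℝ) := by exact_mod_cast hba
  calc ‖∑ j ∈ s, a j * w j - ∑ j ∈ s, b j * w j‖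
      ≤ ∑ j ∈ s, C * (2 * c j - (a j - b j)) := by
        rw [← Finset.sum_sub_distrib]
        exact norm_sum_le_of_le _ pointwise
    _ = C * (2 * ∑ j ∈ s, (c j : ℝ) - (∑ j ∈ s, (a j : ℝ) - ∑ j ∈ s, (b j : ℝ))) := by
        rw [← Finset.mul_sum, Finset.sum_sub_distrib, Finset.sum_sub_distrib, Finset.mul_sum]
    _ ≤ C * (2 * ∑ j ∈ s, c j : ℕ) := by
        push_cast
        gcongr
        linarith

lemma sum_card_fiber_mul {X J S : Type*} [DecidableEq J] [Semiring S] {s : Finset X} {t : Finset J}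
    {g : X → J} (hg : ∀ x ∈ s, g x ∈ t) (w : J → S) :
    ∑ j ∈ t, ((s.filter (g · = j)).card : S) * w j = ∑ x ∈ s, w (g x) := by
  rw [← Finset.sum_fiberwise_of_maps_to' hg]
  simp only [Finset.sum_const, nsmul_eq_mul]

end ExponentialSums

section FrobeniusPoincare

variable {k R : Type*} [Field k] [CommRing R] [Algebra k R] {𝒜 : ℤ → Submodule k R}
  [GradedAlgebra 𝒜] {d m : ℕ} {f : Fin d → R} {δ : Fin d → ℕ}

namespace StandardMonomialBasis

lemma norm_tsum_sub_sum_le (b : StandardMonomialBasis 𝒜 f m)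
    (hneg : ∀ t : ℤ, t < 0 → 𝒜 t = ⊥) (hδ : ∀ l, 0 < δ l) (hf : ∀ l, f l ∈ 𝒜 (δ l)) {A : ℕ}
    (hA : ∀ i, |b.genDegree i| ≤ A) (y : ℂ) {q : ℕ} (hq : 0 < q) :
    ‖∑' j : ℤ, quotPieceDim k 𝒜 (Ideal.span (Set.range (f ^ q))) j * frobeniusWeight y q j -
        ∑ x ∈ latticeBox d q ×ˢ fullColumns b.support,
          frobeniusWeight y q (shiftedDegree δ b.genDegree x)‖ ≤
      Real.exp (‖y‖ * (∑ l, δ l + A : ℕ)) * (2 * (partialColumns b.support q).card : ℕ) := by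
  let deg := shiftedDegree δ b.genDegree
  have full_maps : ∀ x ∈ latticeBox d q ×ˢ fullColumns b.support,
      deg x ∈ boxDegrees δ b.genDegree q :=
    fun x hx => shiftedDegree_mem_boxDegrees (Finset.mem_product.1 hx).1
  have partial_maps : ∀ x ∈ partialColumns b.support q, deg x ∈ boxDegrees δ b.genDegree q :=
    fun x hx => shiftedDegree_mem_boxDegrees (mem_partialColumns.1 hx).1
  have card_full : ∑ j ∈ boxDegrees δ b.genDegree q,
      ((latticeBox d q ×ˢ fullColumns b.support).filter (deg · = j)).card = b.rank * q ^ d := by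
    rw [← Finset.card_eq_sum_card_fiberwise full_maps, Finset.card_product, card_latticeBox,
      rank, mul_comm]
  rw [tsum_eq_sum fun j hj => by rw [b.quotPieceDim_eq_zero hf hj, Nat.cast_zero, zero_mul],
    ← sum_card_fiber_mul full_maps, Finset.card_eq_sum_card_fiberwise partial_maps]
  exact norm_sum_mul_sub_sum_mul_le _ (fun j _ => b.quotPieceDim_le hf q j)
    (card_full.trans_le (b.rank_mul_pow_le_sum_quotPieceDim hneg hδ hf hq))
    (fun j hj => norm_frobeniusWeight_le y hq (abs_le_of_mem_boxDegrees hA hq hj))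
    (Real.exp_pos _).le

theorem tendsto_tsum_quotPieceDim (b : StandardMonomialBasis 𝒜 f m)
    (hneg : ∀ t : ℤ, t < 0 → 𝒜 t = ⊥) (hδ : ∀ l, 0 < δ l) (hf : ∀ l, f l ∈ 𝒜 (δ l))
    {y : ℂ} (hy : y ≠ 0) :
    Tendsto (fun q : ℕ => (1 / (q : ℂ)) ^ d * ∑' j : ℤ,
        quotPieceDim k 𝒜 (Ideal.span (Set.range (f ^ q))) j * frobeniusWeight y q j) atTop
      (nhds ((b.rank / ∏ l, (δ l : ℝ) : ℝ) *
        ∏ l, (1 - Complex.exp (-Complex.I * δ l * y)) / (Complex.I * y))) := by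
  obtain ⟨A, hA⟩ := exists_forall_abs_le b.genDegree
  refine tendsto_of_tendsto_of_dist (tendsto_sum_frobeniusWeight_shiftedDegree hδ b.genDegree
    (fullColumns b.support) hy) ?_
  have error := (tendsto_card_partialColumns_div_pow b.isLowerSet_column).const_mul
    (Real.exp (‖y‖ * (∑ l, δ l + A : ℕ)) * 2)
  rw [mul_zero] at error
  refine squeeze_zero' (.of_forall fun q => dist_nonneg) ?_ error
  filter_upwards [eventually_gt_atTop 0] with q hq
  rw [dist_comm, dist_eq_norm, ← mul_sub, norm_mul, norm_pow, norm_div, norm_one,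
    Complex.norm_natCast]
  calc _ ≤ (1 / (q : ℝ)) ^ d * _ :=
        mul_le_mul_of_nonneg_left (b.norm_tsum_sub_sum_le hneg hδ hf hA y hq) (by positivity)
    _ = _ := by
        push_cast
        ring

end StandardMonomialBasis

lemma bracketPow_span_range (f : Fin d → R) {p : ℕ} [ExpChar R p] (n : ℕ) :
    bracketPow (Ideal.span (Set.range f)) (p ^ n) = Ideal.span (Set.range (f ^ p ^ n)) := by
  have map_frobenius : bracketPow (Ideal.span (Set.range f)) (p ^ n) =
      Ideal.map (iterateFrobenius R p n) (Ideal.span (Set.range f)) := rfl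
  rw [map_frobenius, Ideal.map_span, ← Set.range_comp]
  rfl

lemma FnGen_span_range (𝒜 : ℤ → Submodule k R) (f : Fin d → R) {p : ℕ} [ExpChar R p] (n : ℕ)
    (y : ℂ) :
    FnGen k 𝒜 (Ideal.span (Set.range f)) p d n y = (1 / ((p ^ n : ℕ) : ℂ)) ^ d * ∑' j : ℤ,
      quotPieceDim k 𝒜 (Ideal.span (Set.range (f ^ p ^ n))) j * frobeniusWeight y (p ^ n) j := by
  simp only [FnGen, bracketPow_span_range, smul_eq_mul, Ideal.mul_top, frobeniusWeight,
    Nat.cast_pow]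

lemma finite_quotient_of_isFiniteLength [Algebra.FiniteType k R] {I : Ideal R}
    (hI : IsFiniteLength R (R ⧸ I)) : Module.Finite k (R ⧸ I) := by
  have : IsArtinianRing (R ⧸ I) :=
    isArtinian_of_tower R (isFiniteLength_iff_isNoetherian_isArtinian.1 hI).2
  exact Module.finite_of_isArtinianRing k (R ⧸ I)

end FrobeniusPoincare

theorem frobenius_poincare_hsop_general
    {k R : Type*} [Field k] [CommRing R] [Algebra k R]
    {p : ℕ} (hp : p.Prime) [CharP R p]
    (𝒜 : ℤ → Submodule k R) [GradedAlgebra 𝒜]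
    (hneg : ∀ t : ℤ, t < 0 → 𝒜 t = ⊥)
    {d : ℕ} {f : Fin d → R} {δ : Fin d → ℕ} (hδ : ∀ j, 0 < δ j) (hf : ∀ j, f j ∈ 𝒜 (δ j))
    (hfin : Module.Finite k (R ⧸ Ideal.span (Set.range f))) :
    ∃ e : ℝ, Tendsto (hsSeq k 𝒜 d) atTop (nhds e) ∧ ∀ y : ℂ, y ≠ 0 →
      Tendsto (fun n => FnGen k 𝒜 (Ideal.span (Set.range f)) p d n y) atTop
        (nhds (e * ∏ j, (1 - Complex.exp (-Complex.I * δ j * y)) / (Complex.I * y))) := by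
  obtain ⟨b⟩ := nonempty_standardMonomialBasis 𝒜 hneg hδ hf
  have : ExpChar R p := ExpChar.prime hp
  refine ⟨_, b.tendsto_hsSeq hδ hf, fun y hy => ?_⟩
  simp only [FnGen_span_range]
  exact (b.tendsto_tsum_quotPieceDim hneg hδ hf hy).comp
    (tendsto_pow_atTop_atTop_of_one_lt hp.one_lt)

/-- **Frobenius–Poincaré function with respect to an ideal generated by a homogeneous
system of parameters.**  If `I = (f_1, …, f_d)` with `f_j` homogeneous of degree `δ_j`,
then `F(R,R,I)(y) = e_R · Π_j (1 - e^{-iδ_j y})/(iy)` for every `y ≠ 0`. -/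
theorem frobenius_poincare_hsop
    (k R : Type) [Field k] [CommRing R] [Algebra k R] [Algebra.FiniteType k R]
    (p : ℕ) (hp : p.Prime) [CharP R p]
    (𝒜 : ℤ → Submodule k R) [GradedAlgebra 𝒜]
    (h𝒜neg : ∀ t : ℤ, t < 0 → 𝒜 t = ⊥)
    (h𝒜zero : ∀ x ∈ 𝒜 0, ∃ c : k, algebraMap k R c = x)
    (d : ℕ) (hd : ringKrullDim R = d)
    (f : Fin d → R) (δ : Fin d → ℕ) (hδpos : ∀ j, 0 < δ j)
    (hfhom : ∀ j, f j ∈ 𝒜 (δ j))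
    (hfl : IsFiniteLength R (R ⧸ Ideal.span (Set.range f)))
    (e : ℝ) (he : Tendsto (fun n : ℕ => hsSeq k 𝒜 d n) atTop (nhds e))
    (y : ℂ) (hy : y ≠ 0)
    (L : ℂ)
    (hL : Tendsto (fun n : ℕ => FnGen k 𝒜 (Ideal.span (Set.range f)) p d n y)
        atTop (nhds L)) :
    L = (e : ℂ) * ∏ j : Fin d, (1 - Complex.exp (-Complex.I * (δ j : ℂ) * y)) /
        (Complex.I * y) := by
  obtain ⟨_, he', hF⟩ := frobenius_poincare_hsop_general hp 𝒜 h𝒜neg hδpos hfhom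
    (finite_quotient_of_isFiniteLength hfl)
  exact tendsto_nhds_unique hL (tendsto_nhds_unique he he' ▸ hF y hy)

end
end

section
/- Let R be a one-dimensional finitely generated ℕ-graded domain over an algebraically closed field k of characteristic p > 0, let I be a homogeneous ideal with R/I of finite length, and let h be the smallest integer such that I contains a nonzero homogeneous element of degree h. Then for every nonzero complex number y, F(R,R,I)(y) = e_R · (1 − e^{−ihy})/(iy), where e_R is the Hilbert–Samuel multiplicity of R. -/
open Filter Complex

noncomputable section

/-!
Let `H j = dim 𝒜 j`, let `f ∈ I` be a nonzerodivisor of the least degree `h`, and put `q = p ^ n`.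
Every element of `I` lives in degrees `≥ h`, so `I^{[q]}` lives in degrees `≥ q h` and does not
meet `R` below degree `q h`. On the other hand `R / (f)` is finite-dimensional, so `f` divides
everything in degrees `≥ N` for some `N`; hence `f ^ q ∈ I^{[q]}` divides everything in degrees
`≥ q h + N`. Thus `R / I^{[q]}` has Hilbert function `H` below `q h`, at most `H` on a window of
constant length `N`, and `0` beyond.

The multiplicity `e` is the Cesàro mean of `H`. With `w = -iy`, Abel summation shows that `H` may
be replaced by the constant `e` in `q⁻¹ ∑_{j < q h} H j (exp (w / q)) ^ j`, which leaves a geometric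
sum tending to `e (exp (w h) - 1) / w`, while each of the `N` remaining terms is `o(q)`.
When `h = 0`, the element `f` is a unit and everything vanishes.
-/

open Asymptotics Topology nonZeroDivisors

section CesaroMeans

lemma sum_range_mul_pow_eq {A : Type*} [CommRing A] (a : ℕ → A) (z : A) (n : ℕ) :
    ∑ j ∈ Finset.range n, a j * z ^ j = (∑ i ∈ Finset.range n, a i) * z ^ n -
      (z - 1) * ∑ j ∈ Finset.range n, (∑ i ∈ Finset.range (j + 1), a i) * z ^ j := by
  induction n with
  | zero => simp
  | succ n ih =>
    rw [Finset.sum_range_succ, ih, Finset.sum_range_succ _ n,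
      Finset.sum_range_succ (fun j ↦ (∑ i ∈ Finset.range (j + 1), a i) * z ^ j),
      Finset.sum_range_succ a n]
    ring

lemma norm_exp_div_pow_le (w : ℂ) {q j c : ℕ} (hj : j ≤ q * c) :
    ‖exp (w / q) ^ j‖ ≤ Real.exp (‖w‖ * c) := by
  rw [← exp_nat_mul]
  refine (norm_exp_le_exp_norm _).trans (Real.exp_le_exp.2 ?_)
  rw [norm_mul, norm_div, norm_natCast, norm_natCast, mul_div_left_comm]
  gcongr
  exact div_le_of_le_mul₀ (by positivity) (by positivity) (by rw [mul_comm]; exact_mod_cast hj)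

lemma tendsto_natCast_mul_exp_div_sub_one (w : ℂ) :
    Tendsto (fun q : ℕ ↦ (q : ℂ) * (exp (w / q) - 1)) atTop (𝓝 w) := by
  have hderiv : HasDerivAt (fun t : ℂ ↦ exp (w * t)) w 0 := by
    simpa using ((hasDerivAt_id (0 : ℂ)).const_mul w).cexp
  have hinv : Tendsto (fun q : ℕ ↦ (q : ℂ)⁻¹) atTop (𝓝[≠] 0) := by
    refine tendsto_nhdsWithin_iff.2 ⟨tendsto_inv_atTop_nhds_zero_nat, ?_⟩
    filter_upwards [eventually_ne_atTop 0] with q hq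
    simpa using hq
  simpa [Function.comp_def, div_eq_mul_inv] using hderiv.tendsto_slope_zero.comp hinv

lemma isBigO_exp_div_sub_one (w : ℂ) :
    (fun q : ℕ ↦ exp (w / q) - 1) =O[atTop] fun q : ℕ ↦ (q : ℝ)⁻¹ := by
  have hbig : (fun q : ℕ ↦ (q : ℂ)⁻¹ * (q * (exp (w / q) - 1))) =O[atTop]
      fun q : ℕ ↦ (q : ℂ)⁻¹ * 1 :=
    (isBigO_refl _ _).mul ((tendsto_natCast_mul_exp_div_sub_one w).isBigO_one ℂ)
  refine (hbig.congr' ?_ .rfl).trans (isBigO_of_le _ (by simp))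
  filter_upwards [eventually_ne_atTop 0] with q hq
  exact inv_mul_cancel_left₀ (by exact_mod_cast hq) _

lemma isLittleO_sum_range_norm_succ {E : Type*} [SeminormedAddCommGroup E] {S : ℕ → E}
    (hS : S =o[atTop] fun n ↦ (n : ℝ)) :
    (fun n ↦ ∑ j ∈ Finset.range n, ‖S (j + 1)‖) =o[atTop] fun n : ℕ ↦ (n : ℝ) ^ 2 := by
  have hlower (n : ℕ) : (n : ℝ) ≤ ∑ j ∈ Finset.range n, ((j + 1 : ℕ) : ℝ) := by
    simpa using Finset.card_nsmul_le_sum (Finset.range n) (fun j ↦ ((j + 1 : ℕ) : ℝ)) 1 (by simp)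
  have hupper (n : ℕ) : ∑ j ∈ Finset.range n, ((j + 1 : ℕ) : ℝ) ≤ (n : ℝ) ^ 2 := by
    have := Finset.sum_le_card_nsmul (Finset.range n) (fun j ↦ ((j + 1 : ℕ) : ℝ)) n
      fun j hj ↦ by exact_mod_cast Finset.mem_range.1 hj
    simpa [sq] using this
  refine (IsLittleO.sum_range (hS.norm_left.comp_tendsto (tendsto_add_atTop_nat 1))
    (fun _ ↦ Nat.cast_nonneg _)
    (tendsto_atTop_mono hlower tendsto_natCast_atTop_atTop)).trans_isBigO ?_
  refine IsBigO.of_norm_le fun n ↦ ?_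
  exact (Real.norm_of_nonneg ((Nat.cast_nonneg n).trans (hlower n))).trans_le (hupper n)

lemma isLittleO_comp_mul_add {E : Type*} [SeminormedAddCommGroup E] {S : ℕ → E}
    (hS : S =o[atTop] fun n ↦ (n : ℝ)) {h : ℕ} (hh : 0 < h) (i : ℕ) :
    (fun q ↦ S (q * h + i)) =o[atTop] fun q : ℕ ↦ (q : ℝ) := by
  have htends : Tendsto (fun q ↦ q * h + i) atTop atTop :=
    tendsto_atTop_mono (fun q ↦ le_add_right (Nat.le_mul_of_pos_right q hh)) tendsto_id
  refine (hS.comp_tendsto htends).trans_isBigO (IsBigO.of_bound (h + i) ?_)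
  filter_upwards [eventually_ge_atTop 1] with q hq
  have hq' : q * h + i ≤ (h + i) * q := by nlinarith
  simp only [Function.comp_apply, Real.norm_natCast]
  exact_mod_cast hq'

lemma isLittleO_sum_range_mul_exp_div_pow {a : ℕ → ℂ}
    (ha : (fun n ↦ ∑ i ∈ Finset.range n, a i) =o[atTop] fun n ↦ (n : ℝ))
    (w : ℂ) {h : ℕ} (hh : 0 < h) :
    (fun q : ℕ ↦ ∑ j ∈ Finset.range (q * h), a j * exp (w / q) ^ j)
      =o[atTop] fun q ↦ (q : ℝ) := by
  set S : ℕ → ℂ := fun n ↦ ∑ i ∈ Finset.range n, a i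
  have hboundary : (fun q ↦ S (q * h)) =o[atTop] fun q : ℕ ↦ (q : ℝ) :=
    isLittleO_comp_mul_add ha hh 0
  have hinterior : (fun q ↦ ∑ j ∈ Finset.range (q * h), ‖S (j + 1)‖) =o[atTop]
      fun q : ℕ ↦ (q : ℝ) ^ 2 := by
    refine ((isLittleO_sum_range_norm_succ ha).comp_tendsto
      (tendsto_id.atTop_mul_const' hh)).trans_isBigO ?_
    simp only [Function.comp_def, id, Nat.cast_mul, mul_pow]
    simp_rw [mul_comm _ ((h : ℝ) ^ 2)]
    exact isBigO_const_mul_self _ _ _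
  have hcorrection : (fun q : ℕ ↦ ‖exp (w / q) - 1‖ * ∑ j ∈ Finset.range (q * h), ‖S (j + 1)‖)
      =o[atTop] fun q ↦ (q : ℝ) := by
    refine ((isBigO_exp_div_sub_one w).norm_left.mul_isLittleO hinterior).congr_right fun q ↦ ?_
    rcases eq_or_ne (q : ℝ) 0 with hq | hq
    · simp [hq]
    · field_simp
  refine IsBigO.trans_isLittleO (IsBigO.of_bound (Real.exp (‖w‖ * h)) (.of_forall fun q ↦ ?_))
    (hboundary.norm_left.add hcorrection)
  rw [sum_range_mul_pow_eq, Real.norm_of_nonneg (by positivity), mul_add]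
  refine (norm_sub_le _ _).trans (add_le_add ?_ ?_)
  · rw [norm_mul, mul_comm]
    gcongr
    exact norm_exp_div_pow_le w le_rfl
  · rw [norm_mul, mul_left_comm, Finset.mul_sum]
    gcongr
    refine norm_sum_le_of_le _ fun j hj ↦ ?_
    rw [norm_mul, mul_comm]
    gcongr
    exact norm_exp_div_pow_le w (Finset.mem_range.1 hj).le

lemma tendsto_geom_sum_exp_div {w : ℂ} (hw : w ≠ 0) (h : ℕ) :
    Tendsto (fun q : ℕ ↦ (∑ j ∈ Finset.range (q * h), exp (w / q) ^ j) / q) atTop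
      (𝓝 ((exp (w * h) - 1) / w)) := by
  have hlim := tendsto_natCast_mul_exp_div_sub_one w
  refine (tendsto_const_nhds.div hlim hw).congr' ?_
  filter_upwards [hlim.eventually_ne hw] with q hne
  have hq : (q : ℂ) ≠ 0 := left_ne_zero_of_mul hne
  have hz : exp (w / q) ≠ 1 := sub_ne_zero.1 (right_ne_zero_of_mul hne)
  have hpow : exp (w / q) ^ (q * h) = exp (w * h) := by
    rw [← exp_nat_mul]
    push_cast
    congr 1
    field_simp
  rw [geom_sum_eq hz, hpow, div_div, mul_comm (_ - _) (q : ℂ)]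
  rfl

variable {H : ℕ → ℂ} {e : ℂ}

lemma isLittleO_sum_range_sub_of_tendsto
    (hH : Tendsto (fun n : ℕ ↦ (∑ i ∈ Finset.range n, H i) / n) atTop (𝓝 e)) :
    (fun n ↦ ∑ i ∈ Finset.range n, (H i - e)) =o[atTop] fun n ↦ (n : ℝ) := by
  have hzero : Tendsto (fun n : ℕ ↦ (∑ i ∈ Finset.range n, (H i - e)) / (n : ℂ)) atTop (𝓝 0) := by
    rw [← sub_self e]
    refine (hH.sub_const e).congr' ?_
    filter_upwards [eventually_ne_atTop 0] with n hn
    have hn' : (n : ℂ) ≠ 0 := by exact_mod_cast hn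
    rw [Finset.sum_sub_distrib, Finset.sum_const, Finset.card_range, nsmul_eq_mul]
    field_simp
  refine (isLittleO_of_tendsto' ?_ hzero).trans_isBigO (isBigO_of_le _ (by simp))
  filter_upwards [eventually_ne_atTop 0] with n hn h0
  exact absurd (by exact_mod_cast h0) hn

lemma isLittleO_of_tendsto_cesaro
    (hH : Tendsto (fun n : ℕ ↦ (∑ i ∈ Finset.range n, H i) / n) atTop (𝓝 e)) :
    H =o[atTop] fun n ↦ (n : ℝ) := by
  have hS := isLittleO_sum_range_sub_of_tendsto hH
  have hconst : (fun _ : ℕ ↦ e) =o[atTop] fun n : ℕ ↦ (n : ℝ) :=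
    isLittleO_const_left.2 <| .inr <| tendsto_norm_atTop_atTop.comp tendsto_natCast_atTop_atTop
  have hsucc := isLittleO_comp_mul_add hS one_pos 1
  refine ((hsucc.sub hS).add hconst).congr_left fun n ↦ ?_
  rw [mul_one, Finset.sum_range_succ]
  ring

lemma tendsto_sum_range_mul_exp_div_pow
    (hH : Tendsto (fun n : ℕ ↦ (∑ i ∈ Finset.range n, H i) / n) atTop (𝓝 e))
    {w : ℂ} (hw : w ≠ 0) {h : ℕ} (hh : 0 < h) :
    Tendsto (fun q : ℕ ↦ (∑ j ∈ Finset.range (q * h), H j * exp (w / q) ^ j) / q) atTop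
      (𝓝 (e * ((exp (w * h) - 1) / w))) := by
  have hosc : Tendsto
      (fun q : ℕ ↦ (∑ j ∈ Finset.range (q * h), (H j - e) * exp (w / q) ^ j) / (q : ℂ))
      atTop (𝓝 0) :=
    ((isLittleO_sum_range_mul_exp_div_pow (isLittleO_sum_range_sub_of_tendsto hH) w hh).trans_isBigO
      (isBigO_of_le _ (by simp))).tendsto_div_nhds_zero
  rw [← zero_add (e * _)]
  refine (hosc.add ((tendsto_geom_sum_exp_div hw h).const_mul e)).congr fun q ↦ ?_
  rw [← mul_div_assoc, ← add_div, Finset.mul_sum, ← Finset.sum_add_distrib]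
  simp only [sub_mul, sub_add_cancel]

lemma tendsto_sum_range_mul_exp_div_pow_of_eq_of_le
    (hH : Tendsto (fun n : ℕ ↦ (∑ i ∈ Finset.range n, H i) / n) atTop (𝓝 e))
    {w : ℂ} (hw : w ≠ 0) {h : ℕ} (hh : 0 < h) (N : ℕ) {D : ℕ → ℕ → ℂ}
    (hD : ∀ q j, j < q * h → D q j = H j) (hle : ∀ q j, ‖D q j‖ ≤ ‖H j‖) :
    Tendsto (fun q : ℕ ↦ (∑ j ∈ Finset.range (q * h + N), D q j * exp (w / q) ^ j) / q) atTop
      (𝓝 (e * ((exp (w * h) - 1) / w))) := by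
  have htail (i : ℕ) : (fun q : ℕ ↦ D q (q * h + i) * exp (w / q) ^ (q * h + i))
      =o[atTop] fun q ↦ (q : ℂ) := by
    refine IsBigO.trans_isLittleO (IsBigO.of_bound (Real.exp (‖w‖ * (h + i : ℕ))) ?_)
      ((isLittleO_comp_mul_add (isLittleO_of_tendsto_cesaro hH) hh i).trans_isBigO
        (isBigO_of_le _ (by simp)))
    filter_upwards [eventually_ge_atTop 1] with q hq
    rw [norm_mul, mul_comm]
    gcongr
    · exact norm_exp_div_pow_le w (by nlinarith)
    · exact hle q _
  rw [← add_zero (e * _)]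
  refine ((tendsto_sum_range_mul_exp_div_pow hH hw hh).add
    (IsLittleO.fun_sum fun i (_ : i ∈ Finset.range N) ↦ htail i).tendsto_div_nhds_zero).congr
      fun q ↦ ?_
  rw [← add_div, Finset.sum_range_add]
  congr 2
  exact Finset.sum_congr rfl fun j hj ↦ by rw [hD q j (Finset.mem_range.1 hj)]

end CesaroMeans

section GradedRing

lemma exists_mem_mul_eq_of_dvd {ι σ A : Type*} [DecidableEq ι] [AddLeftCancelMonoid ι] [Semiring A]
    [SetLike σ A] [AddSubmonoidClass σ A] (𝒜 : ι → σ) [GradedRing 𝒜] {i j : ι} {f x : A}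
    (hf : f ∈ 𝒜 i) (hx : x ∈ 𝒜 (i + j)) (hfx : f ∣ x) : ∃ y ∈ 𝒜 j, f * y = x := by
  obtain ⟨z, rfl⟩ := hfx
  refine ⟨DirectSum.decompose 𝒜 z j, SetLike.coe_mem _, ?_⟩
  rw [← DirectSum.coe_decompose_mul_add_of_left_mem 𝒜 hf, DirectSum.decompose_of_mem_same 𝒜 hx]

section DegreeFiltration

variable {ι k R : Type*} [CommRing k] [CommRing R] [Algebra k R]

/-- The part of degree at least `m` of a graded ring, `⨁_{i ≥ m} 𝒜 i`; the step of index `m` of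
its degree filtration. -/
def degreeGE [LE ι] (𝒜 : ι → Submodule k R) (m : ι) : Submodule k R :=
  ⨆ i ≥ m, 𝒜 i

variable {𝒜 : ι → Submodule k R}

lemma le_degreeGE [LE ι] {i m : ι} (h : m ≤ i) : 𝒜 i ≤ degreeGE 𝒜 m :=
  le_iSup₂_of_le i h le_rfl

variable [DecidableEq ι]

lemma degreeGE_mul_le [AddMonoid ι] [Preorder ι] [AddLeftMono ι] [AddRightMono ι]
    [GradedAlgebra 𝒜] (m n : ι) :
    degreeGE 𝒜 m * degreeGE 𝒜 n ≤ degreeGE 𝒜 (m + n) := by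
  simp only [degreeGE, Submodule.iSup_mul, Submodule.mul_iSup, iSup_le_iff, Submodule.mul_le]
  intro j hj i hi x hx y hy
  exact le_degreeGE (add_le_add hi hj) (SetLike.mul_mem_graded hx hy)

lemma pow_mem_degreeGE [AddMonoid ι] [Preorder ι] [AddLeftMono ι] [AddRightMono ι]
    [GradedAlgebra 𝒜] {m : ι} {x : R} (hx : x ∈ degreeGE 𝒜 m) (q : ℕ) :
    x ^ q ∈ degreeGE 𝒜 (q • m) := by
  induction q with
  | zero =>
    rw [pow_zero, zero_nsmul]
    exact le_degreeGE le_rfl (SetLike.one_mem_graded 𝒜)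
  | succ q ih =>
    rw [pow_succ, succ_nsmul]
    exact degreeGE_mul_le _ _ (Submodule.mul_mem_mul ih hx)

lemma degreeGE_zero_eq_top [AddMonoid ι] [LinearOrder ι] [GradedAlgebra 𝒜]
    (hneg : ∀ i < 0, 𝒜 i = ⊥) : degreeGE 𝒜 0 = ⊤ := by
  rw [eq_top_iff, ← (DirectSum.Decomposition.isInternal 𝒜).submodule_iSup_eq_top, iSup_le_iff]
  intro i
  rcases lt_or_ge i 0 with hi | hi
  · simp [hneg i hi]
  · exact le_degreeGE hi

lemma disjoint_degreeGE [AddMonoid ι] [Preorder ι] [GradedAlgebra 𝒜] {i m : ι} (h : i < m) :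
    Disjoint (𝒜 i) (degreeGE 𝒜 m) :=
  ((DirectSum.Decomposition.isInternal 𝒜).submodule_iSupIndep i).mono_right <|
    iSup₂_le fun j hj ↦ le_iSup₂_of_le j (h.trans_le hj).ne' le_rfl

lemma mem_degreeGE_of_isHomogeneous [AddMonoid ι] [LinearOrder ι] [GradedAlgebra 𝒜]
    {I : Ideal R} (hI : I.IsHomogeneous 𝒜) {m : ι}
    (hmin : ∀ i < m, ∀ x ∈ I, x ∈ 𝒜 i → x = 0) {x : R} (hx : x ∈ I) : x ∈ degreeGE 𝒜 m := by
  classical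
  rw [← DirectSum.sum_support_decompose 𝒜 x]
  refine Submodule.sum_mem _ fun i _ ↦ ?_
  rcases lt_or_ge i m with hi | hi
  · simp [hmin i hi _ (hI i hx) (SetLike.coe_mem _)]
  · exact le_degreeGE hi (SetLike.coe_mem _)

lemma bracketPow_le_degreeGE [AddMonoid ι] [LinearOrder ι] [AddLeftMono ι] [AddRightMono ι]
    [GradedAlgebra 𝒜] (hneg : ∀ i < 0, 𝒜 i = ⊥) {I : Ideal R} {m : ι}
    (hI : ∀ x ∈ I, x ∈ degreeGE 𝒜 m) (q : ℕ) :
    (bracketPow I q).restrictScalars k ≤ degreeGE 𝒜 (q • m) := by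
  intro x hx
  refine Submodule.span_induction ?_ (Submodule.zero_mem _)
    (fun _ _ _ _ ↦ Submodule.add_mem _) (fun a y _ hy ↦ ?_) hx
  · rintro _ ⟨z, hz, rfl⟩
    exact pow_mem_degreeGE (hI z hz) q
  · have ha : a ∈ degreeGE 𝒜 0 := degreeGE_zero_eq_top hneg ▸ Submodule.mem_top
    simpa using degreeGE_mul_le _ _ (Submodule.mul_mem_mul ha hy)

end DegreeFiltration

section FiniteQuotient

variable {ι k R : Type*} [DecidableEq ι] [AddMonoid ι] [Field k] [CommRing R] [Algebra k R]
  {𝒜 : ι → Submodule k R} [GradedAlgebra 𝒜]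

lemma finite_setOf_not_le_of_finite_quotient {J : Ideal R}
    (hJ : J.IsHomogeneous 𝒜) [Module.Finite k (R ⧸ J)] :
    {i | ¬ 𝒜 i ≤ J.restrictScalars k}.Finite := by
  classical
  obtain ⟨W, hW⟩ := (J.restrictScalars k).exists_isCompl
  have : Module.Finite k (R ⧸ J.restrictScalars k) := ‹Module.Finite k (R ⧸ J)›
  have : Module.Finite k W := .equiv (Submodule.quotientEquivOfIsCompl _ W hW)
  obtain ⟨s, rfl⟩ := Module.Finite.iff_fg.1 this
  refine (s.biUnion fun w ↦ (DirectSum.decompose 𝒜 w).support).finite_toSet.subset fun i hi ↦ ?_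
  contrapose! hi
  have hker : Submodule.span k s ≤ LinearMap.ker (GradedAlgebra.proj 𝒜 i) :=
    Submodule.span_le.2 fun w hw ↦ by
      simp only [Finset.mem_coe, Finset.mem_biUnion, GradedAlgebra.mem_support_iff, not_exists,
        not_and, not_not] at hi
      exact hi w hw
  refine not_not.2 fun x hx ↦ ?_
  obtain ⟨a, ha, w, hw, rfl⟩ := Submodule.mem_sup.1 (hW.sup_eq_top ▸ Submodule.mem_top (x := x))
  have hproj : GradedAlgebra.proj 𝒜 i (a + w) = GradedAlgebra.proj 𝒜 i a := by
    rw [map_add, LinearMap.mem_ker.1 (hker hw), add_zero]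
  rw [GradedAlgebra.proj_apply, DirectSum.decompose_of_mem_same 𝒜 hx] at hproj
  rw [hproj]
  exact hJ i ha

lemma isUnit_of_mem_zero_of_mem_nonZeroDivisors [Module.Finite k (𝒜 0)] {f : R}
    (hf : f ∈ 𝒜 0) (hf' : f ∈ R⁰) : IsUnit f := by
  have hmaps : ∀ x ∈ 𝒜 0, LinearMap.mulLeft k f x ∈ 𝒜 0 := fun x hx ↦ by
    simpa using SetLike.mul_mem_graded hf hx
  have hinj : Function.Injective ((LinearMap.mulLeft k f).restrict hmaps) := fun x y hxy ↦
    Subtype.ext ((mul_cancel_left_mem_nonZeroDivisors hf').1 (congrArg Subtype.val hxy))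
  obtain ⟨y, hy⟩ := LinearMap.injective_iff_surjective.1 hinj ⟨1, SetLike.one_mem_graded 𝒜⟩
  exact .of_mul_eq_one y (congrArg Subtype.val hy)

end FiniteQuotient

section IntGrading

variable {k R : Type*} [Field k] [CommRing R] [Algebra k R] {𝒜 : ℤ → Submodule k R}
  [GradedAlgebra 𝒜] {f : R}

lemma exists_forall_ge_le_span_singleton {h : ℤ} (hf : f ∈ 𝒜 h)
    [Module.Finite k (R ⧸ Ideal.span {f})] :
    ∃ N : ℕ, ∀ m : ℤ, N ≤ m → 𝒜 m ≤ (Ideal.span {f}).restrictScalars k := by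
  have hhom : (Ideal.span {f}).IsHomogeneous 𝒜 :=
    Ideal.homogeneous_span _ _ fun _ hx ↦ ⟨h, by rwa [Set.mem_singleton_iff.1 hx]⟩
  obtain ⟨B, hB⟩ := (finite_setOf_not_le_of_finite_quotient hhom).bddAbove
  refine ⟨(B + 1).toNat, fun m hm ↦ by_contra fun hnot ↦ ?_⟩
  have := hB hnot
  omega

lemma finite_graded_piece (hneg : ∀ i < 0, 𝒜 i = ⊥) {h : ℤ} (hh : 0 < h)
    (hf : f ∈ 𝒜 h) [Module.Finite k (R ⧸ Ideal.span {f})] (m : ℤ) : Module.Finite k (𝒜 m) := by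
  suffices H : ∀ n : ℕ, ∀ m : ℤ, m < n → Module.Finite k (𝒜 m) from
    H (m + 1).toNat m (by omega)
  intro n
  induction n with
  | zero =>
    intro m hm
    rw [hneg m (by simpa using hm)]
    infer_instance
  | succ n ih =>
    intro m hm
    have hker : 𝒜 m ⊓ LinearMap.ker (Submodule.mkQ ((Ideal.span {f}).restrictScalars k)) ≤
        (𝒜 (m - h)).map (LinearMap.mulLeft k f) := by
      rw [Submodule.ker_mkQ]
      exact fun x ⟨hx, hfx⟩ ↦ exists_mem_mul_eq_of_dvd 𝒜 hf (by simpa using hx)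
        (Ideal.mem_span_singleton.1 hfx)
    have := ih (m - h) (by omega)
    have : Module.Finite k (R ⧸ (Ideal.span {f}).restrictScalars k) :=
      ‹Module.Finite k (R ⧸ Ideal.span {f})›
    have := Submodule.finiteDimensional_of_le hker
    exact Module.Finite.iff_fg.2 <| Submodule.fg_of_fg_map_of_fg_inf_ker _
      (IsNoetherian.noetherian _) (Module.Finite.iff_fg.1 this)

lemma le_span_singleton_pow {h N : ℤ} (hh : 0 ≤ h) (hf : f ∈ 𝒜 h)
    (hN : ∀ m : ℤ, N ≤ m → 𝒜 m ≤ (Ideal.span {f}).restrictScalars k) (q : ℕ) :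
    ∀ m : ℤ, q * h + N ≤ m → 𝒜 m ≤ (Ideal.span {f ^ q}).restrictScalars k := by
  induction q with
  | zero => simp
  | succ q ih =>
    intro m hm x hx
    push_cast at hm
    have hqh : 0 ≤ q * h := by positivity
    obtain ⟨y, hy, rfl⟩ := exists_mem_mul_eq_of_dvd 𝒜 (j := m - h) hf (by simpa using hx)
      (Ideal.mem_span_singleton.1 (hN m (by linarith) hx))
    obtain ⟨z, rfl⟩ := Ideal.mem_span_singleton.1 (ih (m - h) (by linarith) hy)
    exact Ideal.mem_span_singleton.2 ⟨z, by ring⟩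

end IntGrading

end GradedRing

lemma tsum_int_eq_sum_range {E : Type*} [AddCommMonoid E] [TopologicalSpace E] {g : ℤ → E} {m : ℕ}
    (hneg : ∀ j < 0, g j = 0) (hge : ∀ j : ℤ, m ≤ j → g j = 0) :
    ∑' j, g j = ∑ j ∈ Finset.range m, g j := by
  rw [← Nat.cast_injective.tsum_eq (f := g) fun j hj ↦ ?_]
  · exact tsum_eq_sum fun j hj ↦ hge j (by simpa using hj)
  · rcases lt_or_ge j 0 with hj' | hj'
    · exact absurd (hneg j hj') hj
    · exact ⟨j.toNat, Int.toNat_of_nonneg hj'⟩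

section QuotPieceDim

variable {k R M : Type*} [Field k] [CommRing R] [Algebra k R] [AddCommGroup M] [Module R M]
  [Module k M] [IsScalarTower k R M] {ℳ : ℤ → Submodule k M} {N : Submodule R M} {j : ℤ}

lemma quotPieceDim_le_finrank [Module.Finite k (ℳ j)] :
    quotPieceDim k ℳ N j ≤ Module.finrank k (ℳ j) :=
  Submodule.finrank_map_le _ _

lemma quotPieceDim_eq_finrank_of_disjoint (h : Disjoint (ℳ j) (N.restrictScalars k)) :
    quotPieceDim k ℳ N j = Module.finrank k (ℳ j) := by
  rw [quotPieceDim, ← LinearMap.range_domRestrict]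
  refine LinearMap.finrank_range_of_inj (LinearMap.ker_eq_bot.1 (LinearMap.ker_eq_bot'.2 ?_))
  rintro ⟨x, hx⟩ hx0
  exact Subtype.ext (Submodule.disjoint_def.1 h x hx ((Submodule.Quotient.mk_eq_zero N).1 hx0))

lemma quotPieceDim_eq_zero_of_le (h : ℳ j ≤ N.restrictScalars k) :
    quotPieceDim k ℳ N j = 0 := by
  have hmap : (ℳ j).map (N.mkQ.restrictScalars k) = ⊥ :=
    le_bot_iff.1 <| Submodule.map_le_iff_le_comap.2 fun _ hx ↦
      (Submodule.Quotient.mk_eq_zero N).2 (h hx)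
  rw [quotPieceDim, hmap, finrank_bot]

lemma FnGen_eq_zero_of_isUnit_mem {I : Ideal R} {f : R} (hfI : f ∈ I) (hf : IsUnit f)
    (p d n : ℕ) (y : ℂ) : FnGen k ℳ I p d n y = 0 := by
  have htop : bracketPow I (p ^ n) = ⊤ :=
    Ideal.eq_top_of_isUnit_mem _ (Ideal.subset_span ⟨f, hfI, rfl⟩) (hf.pow (p ^ n))
  have hzero (j : ℤ) : quotPieceDim k ℳ (bracketPow I (p ^ n) • ⊤ : Submodule R M) j = 0 := by
    rw [htop, Submodule.top_smul]
    exact quotPieceDim_eq_zero_of_le le_top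
  simp only [FnGen, hzero, Nat.cast_zero, zero_mul, tsum_zero, mul_zero]

lemma FnGen_one_eq_sum_range (hneg : ∀ i < 0, ℳ i = ⊥) (I : Ideal R) (p n : ℕ) {m : ℕ}
    (hm : ∀ j : ℤ, m ≤ j → quotPieceDim k ℳ (bracketPow I (p ^ n) • ⊤ : Submodule R M) j = 0)
    (y : ℂ) :
    FnGen k ℳ I p 1 n y =
      (∑ j ∈ Finset.range m,
        (quotPieceDim k ℳ (bracketPow I (p ^ n) • ⊤ : Submodule R M) j : ℂ) *
          exp (-Complex.I * y / (p ^ n : ℕ)) ^ j) / (p ^ n : ℕ) := by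
  rw [FnGen, tsum_int_eq_sum_range (m := m) (fun j hj ↦ ?_) fun j hj ↦ by simp [hm j hj], pow_one,
    one_div_mul_eq_div, Nat.cast_pow]
  · congr 1
    refine Finset.sum_congr rfl fun j _ ↦ ?_
    rw [← exp_nat_mul]
    congr 2
    push_cast
    ring
  · rw [quotPieceDim_eq_zero_of_le (hneg j hj ▸ bot_le), Nat.cast_zero, zero_mul]

lemma tendsto_cesaro_finrank_of_tendsto_hsSeq (hneg : ∀ i < 0, ℳ i = ⊥)
    {e : ℝ} (he : Tendsto (hsSeq k ℳ 1) atTop (𝓝 e)) :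
    Tendsto (fun n : ℕ ↦ (∑ j ∈ Finset.range n, (Module.finrank k (ℳ j) : ℂ)) / n)
      atTop (𝓝 (e : ℂ)) := by
  have hsum (n : ℕ) : hsSeq k ℳ 1 n =
      (∑ j ∈ Finset.range (n + 1), (Module.finrank k (ℳ j) : ℝ)) / n := by
    rw [hsSeq, tsum_int_eq_sum_range (m := n + 1) (fun j hj ↦ by rw [hneg j hj]; simp)
      fun j hj ↦ if_neg (by push_cast at hj; omega), Nat.factorial_one, Nat.cast_one, pow_one,
      one_div_mul_eq_div]
    congr 1
    refine Finset.sum_congr rfl fun j hj ↦ if_pos ?_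
    have := Finset.mem_range.1 hj
    omega
  have hreal : Tendsto (fun n : ℕ ↦ (∑ j ∈ Finset.range n, (Module.finrank k (ℳ j) : ℝ)) / n)
      atTop (𝓝 e) := by
    rw [← tendsto_add_atTop_iff_nat 1, ← mul_one e]
    refine (he.mul (tendsto_natCast_div_add_atTop (1 : ℝ))).congr' ?_
    filter_upwards [eventually_ne_atTop 0] with n hn
    have hn' : (n : ℝ) ≠ 0 := by exact_mod_cast hn
    rw [hsum, Nat.cast_add, Nat.cast_one, div_mul_div_cancel₀ hn']
  simpa [Function.comp_def] using (continuous_ofReal.tendsto e).comp hreal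

end QuotPieceDim

section FrobeniusPoincare

variable {k R : Type*} [Field k] [CommRing R] [Algebra k R]

lemma finite_quotient_span_singleton_of_ringKrullDim_le_one [Algebra.FiniteType k R]
    (hdim : ringKrullDim R ≤ 1) {f : R} (hf : f ∈ R⁰) : Module.Finite k (R ⧸ Ideal.span {f}) := by
  have hsucc : ringKrullDim (R ⧸ Ideal.span {f}) + 1 ≤ 0 + 1 := by
    simpa using (ringKrullDim_quotient_succ_le_of_nonZeroDivisor hf).trans hdim
  rw [Module.finite_iff_krullDimLE_zero, Ring.krullDimLE_iff]
  exact_mod_cast ENat.WithBot.add_le_add_one_right_iff.1 hsucc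

variable {𝒜 : ℤ → Submodule k R} [GradedAlgebra 𝒜] {I : Ideal R}

lemma quotPieceDim_bracketPow_eq_finrank (hneg : ∀ i < 0, 𝒜 i = ⊥) {h : ℤ}
    (hI : ∀ x ∈ I, x ∈ degreeGE 𝒜 h) {q : ℕ} {j : ℤ} (hj : j < q * h) :
    quotPieceDim k 𝒜 (bracketPow I q • ⊤ : Submodule R R) j = Module.finrank k (𝒜 j) := by
  rw [smul_eq_mul, Ideal.mul_top]
  refine quotPieceDim_eq_finrank_of_disjoint ?_
  exact (disjoint_degreeGE (by simpa using hj)).mono_right (bracketPow_le_degreeGE hneg hI q)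

lemma quotPieceDim_bracketPow_eq_zero {h N : ℤ} (hh : 0 ≤ h) {f : R} (hfI : f ∈ I) (hf : f ∈ 𝒜 h)
    (hN : ∀ m : ℤ, N ≤ m → 𝒜 m ≤ (Ideal.span {f}).restrictScalars k) {q : ℕ} {j : ℤ}
    (hj : q * h + N ≤ j) :
    quotPieceDim k 𝒜 (bracketPow I q • ⊤ : Submodule R R) j = 0 := by
  rw [smul_eq_mul, Ideal.mul_top]
  have hfq : f ^ q ∈ bracketPow I q := Ideal.subset_span ⟨f, hfI, rfl⟩
  exact quotPieceDim_eq_zero_of_le <| (le_span_singleton_pow hh hf hN q j hj).trans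
    ((Ideal.span_singleton_le_iff_mem _).2 hfq)

lemma tendsto_FnGen_of_degree_pos (hneg : ∀ i < 0, 𝒜 i = ⊥) {p h : ℕ} (hp : 1 < p) (hh : 0 < h)
    (hI : ∀ x ∈ I, x ∈ degreeGE 𝒜 (h : ℤ)) {f : R} (hfI : f ∈ I) (hf : f ∈ 𝒜 h)
    [Module.Finite k (R ⧸ Ideal.span {f})] {e : ℝ} (he : Tendsto (hsSeq k 𝒜 1) atTop (𝓝 e))
    {y : ℂ} (hy : y ≠ 0) :
    Tendsto (fun n ↦ FnGen k 𝒜 I p 1 n y) atTop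
      (𝓝 (e * ((exp (-Complex.I * y * h) - 1) / (-Complex.I * y)))) := by
  obtain ⟨N, hN⟩ := exists_forall_ge_le_span_singleton hf
  have (m : ℤ) : Module.Finite k (𝒜 m) := finite_graded_piece hneg (by exact_mod_cast hh) hf m
  have hlim := tendsto_sum_range_mul_exp_div_pow_of_eq_of_le
    (tendsto_cesaro_finrank_of_tendsto_hsSeq hneg he) (w := -Complex.I * y) (by simp [hy]) hh N
    (D := fun q j ↦ quotPieceDim k 𝒜 (bracketPow I q • ⊤ : Submodule R R) j)
    (fun q j hj ↦ by rw [quotPieceDim_bracketPow_eq_finrank hneg hI (by exact_mod_cast hj)])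
    (fun q j ↦ by simpa using quotPieceDim_le_finrank)
  refine (hlim.comp (tendsto_pow_atTop_atTop_of_one_lt hp)).congr fun n ↦ ?_
  refine (FnGen_one_eq_sum_range hneg I p n (fun j hj ↦ ?_) y).symm
  exact quotPieceDim_bracketPow_eq_zero (Int.natCast_nonneg h) hfI hf hN (by exact_mod_cast hj)

theorem frobenius_poincare_dim_one_general [Algebra.FiniteType k R] [Module.Finite k (𝒜 0)]
    (hneg : ∀ i < 0, 𝒜 i = ⊥) (hdim : ringKrullDim R ≤ 1) {p : ℕ} (hp : 1 < p)
    (hI : I.IsHomogeneous 𝒜) {h : ℕ} (hh : ∃ x ∈ I, x ∈ R⁰ ∧ x ∈ 𝒜 h)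
    (hmin : ∀ h' : ℕ, (∃ x ∈ I, x ≠ 0 ∧ x ∈ 𝒜 h') → h ≤ h')
    {e : ℝ} (he : Tendsto (hsSeq k 𝒜 1) atTop (𝓝 e)) {y : ℂ} (hy : y ≠ 0) :
    Tendsto (fun n ↦ FnGen k 𝒜 I p 1 n y) atTop
      (𝓝 (e * (1 - exp (-Complex.I * h * y)) / (Complex.I * y))) := by
  obtain ⟨f, hfI, hfreg, hf⟩ := hh
  rcases h.eq_zero_or_pos with rfl | hpos
  · have hunit := isUnit_of_mem_zero_of_mem_nonZeroDivisors (by simpa using hf) hfreg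
    simp [FnGen_eq_zero_of_isUnit_mem hfI hunit]
  · have := finite_quotient_span_singleton_of_ringKrullDim_le_one (k := k) hdim hfreg
    have hzero : ∀ i < (h : ℤ), ∀ x ∈ I, x ∈ 𝒜 i → x = 0 := by
      intro i hi x hxI hx
      rcases lt_or_ge i 0 with hi0 | hi0
      · simpa [hneg i hi0] using hx
      · lift i to ℕ using hi0
        by_contra hx0
        exact (hmin i ⟨x, hxI, hx0, hx⟩).not_gt (by exact_mod_cast hi)
    have hlim := tendsto_FnGen_of_degree_pos hneg hp hpos
      (fun _ ↦ mem_degreeGE_of_isHomogeneous hI hzero) hfI hf he hy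
    convert hlim using 2
    rw [mul_right_comm _ (h : ℂ), neg_mul, div_neg, ← neg_div, neg_sub, mul_div_assoc, neg_mul]

end FrobeniusPoincare

/-- **Frobenius–Poincaré functions in dimension one.**  For a one-dimensional finitely
generated `ℕ`-graded domain `R` over an algebraically closed field `k`, and `I` a
homogeneous ideal of finite colength with `h` the least degree of a nonzero homogeneous
element of `I`, one has `F(R,R,I)(y) = e_R (1-e^{-ihy})/(iy)` for `y ≠ 0`. -/
theorem frobenius_poincare_dim_one
    (k R : Type) [Field k] [IsAlgClosed k] [CommRing R] [IsDomain R]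
    [Algebra k R] [Algebra.FiniteType k R]
    (p : ℕ) (hp : p.Prime) [CharP R p]
    (𝒜 : ℤ → Submodule k R) [GradedAlgebra 𝒜]
    (h𝒜neg : ∀ t : ℤ, t < 0 → 𝒜 t = ⊥)
    (h𝒜zero : ∀ x ∈ 𝒜 0, ∃ c : k, algebraMap k R c = x)
    (hdim : ringKrullDim R = 1)
    (I : Ideal R) (hI : Ideal.IsHomogeneous 𝒜 I) (hIfl : IsFiniteLength R (R ⧸ I))
    (h : ℕ) (hh : ∃ x ∈ I, x ≠ 0 ∧ x ∈ 𝒜 (h : ℤ))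
    (hmin : ∀ h' : ℕ, (∃ x ∈ I, x ≠ 0 ∧ x ∈ 𝒜 (h' : ℤ)) → h ≤ h')
    (e : ℝ) (he : Tendsto (fun n : ℕ => hsSeq k 𝒜 1 n) atTop (nhds e))
    (y : ℂ) (hy : y ≠ 0)
    (L : ℂ) (hL : Tendsto (fun n : ℕ => FnGen k 𝒜 I p 1 n y) atTop (nhds L)) :
    L = (e : ℂ) * (1 - Complex.exp (-Complex.I * (h : ℂ) * y)) / (Complex.I * y) := by
  have : Module.Finite k (𝒜 0) := Submodule.finiteDimensional_of_le
    (S₂ := LinearMap.range (Algebra.linearMap k R)) h𝒜zero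
  obtain ⟨f, hfI, hf0, hf⟩ := hh
  exact tendsto_nhds_unique hL <| frobenius_poincare_dim_one_general h𝒜neg hdim.le hp.one_lt hI
    ⟨f, hfI, mem_nonZeroDivisors_of_ne_zero hf0, hf⟩ hmin he hy

end
end
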